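/- arXiv:math/0502221 — 2 statements merged into one kernel-verified Lean document; each statement's English description precedes it below -/
import Mathlib

section
/- For all integers k ≥ 2 and n ≥ 3, the diameter of the Cayley graph of SL_n(ℤ/kℤ) with respect to the generating set {Ā_n, B̄_n} is at most 3600·n²·ln k; that is, every element of SL_n(ℤ/kℤ) can be written as a product of at most 3600·n²·ln k elements of {Ā_n, Ā_n⁻¹, B̄_n, B̄_n⁻¹}. -/
/-- The matrix `A_n`: 1's on the diagonal, an additional 1 in the (1,2) entry
(zero-indexed: (0,1)), and 0's elsewhere. -/
def Amat (n : ℕ) (R : Type) [CommRing R] : Matrix (Fin n) (Fin n) R :=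
  Matrix.of fun i j => if i = j then 1 else if (i : ℕ) = 0 ∧ (j : ℕ) = 1 then 1 else 0

/-- The matrix `B_n`: 1 in each entry (i, i+1), (−1)^(n−1) in the (n,1) entry
(zero-indexed: (n-1,0)), and 0's elsewhere. -/
def Bmat (n : ℕ) (R : Type) [CommRing R] : Matrix (Fin n) (Fin n) R :=
  Matrix.of fun i j => if (j : ℕ) = (i : ℕ) + 1 then 1
    else if (i : ℕ) = n - 1 ∧ (j : ℕ) = 0 then (-1 : R) ^ (n - 1) else 0

/-!
Multiplying out `1 + X` and `1 + Y` with `X * Y = 0` adds `X` and `Y`, so short words for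
unipotent matrices can be combined additively. Conjugates of `A` by powers of `B` give, by Horner's
scheme, every `1 + ∑ cᵢ Eᵢ,ᵢ₊₁` with `i ≥ 2` and `cᵢ ∈ {-1, 0, 1}` in `O(n)` letters, and
conjugating with such matrices gives every transvection `1 + e₁ dᵀ` with `d = (0, 0, d₃, …)` and
`dᵢ ∈ {0, 1, 2}`.

If `g` acts on the plane `⟨e₁, e₂⟩` with determinant `1` and trace `3`, then
`gʲ e₁ + g⁻ʲ e₁ = L₂ⱼ e₁` for the Lucas numbers `L`. As every residue mod `k` has an expansion with
`O(log k)` digits in `{0, 1, 2}` with respect to `L₀ / 2, L₂, L₄, …`, Horner's scheme for the powers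
of `g` writes any unipotent matrix that differs from `1` in a single row with `O(n log k)` letters.
Finally `ℤ/kℤ` has stable rank one, so Gaussian elimination needs only `O(n)` such matrices.
-/

open Matrix
open scoped Pointwise

section CayleyBall

variable {G : Type*} [Group G]

/-- The ball of radius `m` around `1` in the Cayley graph of `G` with respect to `S`. -/
def cayleyBall (S : Set G) (m : ℕ) : Set G :=
  insert 1 (S ∪ S⁻¹) ^ m

namespace cayleyBall

variable {S T : Set G} {g h : G} {a b m : ℕ}

lemma one_mem : 1 ∈ cayleyBall S m :=
  Set.one_mem_pow (Set.mem_insert _ _)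

lemma mono (hab : a ≤ b) : cayleyBall S a ⊆ cayleyBall S b :=
  Set.pow_subset_pow_right (Set.mem_insert _ _) hab

lemma of_mem (hg : g ∈ S) : g ∈ cayleyBall S 1 := by
  rw [cayleyBall, pow_one]
  exact .inr (.inl hg)

lemma right_mem_pair : h ∈ cayleyBall {g, h} 1 :=
  of_mem (Set.mem_insert_of_mem g rfl)

lemma mul_mem (hg : g ∈ cayleyBall S a) (hh : h ∈ cayleyBall S b) :
    g * h ∈ cayleyBall S (a + b) := by
  rw [cayleyBall, pow_add]
  exact Set.mul_mem_mul hg hh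

lemma inv_eq : (cayleyBall S m)⁻¹ = cayleyBall S m := by
  rw [cayleyBall, ← inv_pow, Set.inv_insert, Set.union_inv, inv_inv, inv_one, Set.union_comm]

lemma inv_mem (hg : g ∈ cayleyBall S m) : g⁻¹ ∈ cayleyBall S m :=
  Set.mem_inv.1 ((inv_eq (S := S)).symm ▸ hg)

lemma pow_mem (hg : g ∈ cayleyBall S a) (m : ℕ) : g ^ m ∈ cayleyBall S (m * a) := by
  rw [cayleyBall, mul_comm, pow_mul]
  exact Set.pow_mem_pow hg

lemma subset_mul (hT : T ⊆ cayleyBall S a) : cayleyBall T m ⊆ cayleyBall S (a * m) := by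
  rw [cayleyBall, cayleyBall, pow_mul]
  refine Set.pow_subset_pow_left (Set.insert_subset one_mem (Set.union_subset hT ?_))
  exact fun g hg ↦ inv_inv g ▸ inv_mem (hT hg)

lemma exists_list (hg : g ∈ cayleyBall S m) :
    ∃ l : List G, l.length ≤ m ∧ (∀ x ∈ l, x ∈ S ∨ x⁻¹ ∈ S) ∧ l.prod = g := by
  induction m generalizing g with
  | zero => exact ⟨[], le_rfl, by simp, by simpa [cayleyBall, eq_comm] using hg⟩
  | succ m ih =>
    rw [cayleyBall, pow_succ'] at hg
    obtain ⟨x, hx, h, hh, rfl⟩ := Set.mem_mul.1 hg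
    obtain ⟨l, hlen, hl, rfl⟩ := ih hh
    obtain rfl | hx := hx
    · exact ⟨l, hlen.trans m.le_succ, hl, (one_mul _).symm⟩
    · exact ⟨x :: l, Nat.succ_le_succ hlen, List.forall_mem_cons.2 ⟨hx, hl⟩, List.prod_cons⟩

end cayleyBall

end CayleyBall

section StableRankOne

/-- Bass's condition `sr R = 1` for a commutative ring, in terms of coprime pairs. -/
def HasStableRankOne (R : Type*) [CommRing R] : Prop :=
  ∀ a b : R, IsCoprime a b → ∃ x, IsUnit (a + x * b)

lemma hasStableRankOne_of_finite_maximalSpectrum (R : Type*) [CommRing R]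
    [Finite (MaximalSpectrum R)] : HasStableRankOne R := by
  classical
  intro a b hab
  have hI : Pairwise (Function.onFun IsCoprime (MaximalSpectrum.asIdeal (R := R))) :=
    fun I J hIJ ↦ MaximalSpectrum.isCoprime_of_ne hIJ
  -- By the Chinese remainder theorem, `x` can be `1` where `a` vanishes and `0` elsewhere.
  obtain ⟨x, hx⟩ := Ideal.exists_forall_sub_mem_ideal hI
    fun I ↦ if a ∈ I.asIdeal then 1 else 0
  refine ⟨x, by_contra fun hunit ↦ ?_⟩
  obtain ⟨M, hM, hmem⟩ := exists_max_ideal_of_mem_nonunits (mem_nonunits_iff.2 hunit)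
  have hxM := hx ⟨M, hM⟩
  by_cases ha : a ∈ M
  · have hxb : x * b ∈ M := (M.add_mem_iff_right ha).1 hmem
    have hb : b ∈ M := by
      have h1b : (x - 1) * b ∈ M := M.mul_mem_right b (by simpa [ha] using hxM)
      simpa [sub_mul] using M.sub_mem hxb h1b
    obtain ⟨u, v, huv⟩ := hab
    exact hM.ne_top (M.eq_top_iff_one.2
      (huv ▸ M.add_mem (M.mul_mem_left u ha) (M.mul_mem_left v hb)))
  · have hxM : x ∈ M := by simpa [ha] using hxM
    exact ha ((M.add_mem_iff_left (M.mul_mem_right b hxM)).1 hmem)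

end StableRankOne

section Elimination

variable {n R : Type*} [DecidableEq n] [CommRing R]

lemma one_row_eq_single (i : n) : (1 : Matrix n n R) i = Pi.single i 1 :=
  funext fun _ ↦ one_eq_pi_single

variable [Fintype n]

variable (n R) in
/-- The elements of `SL n R` which differ from `1` only in off-diagonal entries of a single row. -/
def rowTransvections : Set (SpecialLinearGroup n R) :=
  {g | ∃ (p : n) (x : n → R), x p = 0 ∧ g.1 = 1 + vecMulVec (Pi.single p 1) x}

lemma one_add_vecMulVec_single_mul (p : n) (x : n → R) (M : Matrix n n R) :
    (1 + vecMulVec (Pi.single p 1) x) * M = M.updateRow p (M p + x ᵥ* M) := by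
  rw [add_mul, one_mul, vecMulVec_mul]
  ext i j
  by_cases hi : i = p <;> simp [hi, vecMulVec_apply]

lemma mul_one_add_vecMulVec_single_apply (M : Matrix n n R) (p : n) (x : n → R) (i : n) :
    (M * (1 + vecMulVec (Pi.single p 1) x)) i = M i + M i p • x := by
  rw [mul_add, mul_one, mul_vecMulVec]
  ext j
  simp [vecMulVec_apply]

lemma det_one_add_vecMulVec (u w : n → R) : (1 + vecMulVec u w).det = 1 + w ⬝ᵥ u := by
  rw [vecMulVec_eq Unit, det_one_add_replicateCol_mul_replicateRow]

lemma exists_mem_rowTransvections {p : n} {x : n → R} (hx : x p = 0) :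
    ∃ t ∈ rowTransvections n R, t.1 = 1 + vecMulVec (Pi.single p 1) x :=
  ⟨⟨_, by simp [det_one_add_vecMulVec, hx]⟩, ⟨p, x, hx, rfl⟩, rfl⟩

lemma exists_mem_rowTransvections_mul (g : Matrix.SpecialLinearGroup n R) {p : n} {x : n → R}
    (hx : x p = 0) :
    ∃ t ∈ rowTransvections n R, (t * g).1 = g.1.updateRow p (g.1 p + x ᵥ* g.1) := by
  obtain ⟨t, ht, htx⟩ := exists_mem_rowTransvections hx
  exact ⟨t, ht, by rw [Matrix.SpecialLinearGroup.coe_mul, htx, one_add_vecMulVec_single_mul]⟩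

-- Row `i` of `g⁻¹` writes `1` as a combination of the entries of column `i` of `g`.
lemma HasStableRankOne.exists_isUnit_mul_apply (hR : HasStableRankOne R)
    (g : Matrix.SpecialLinearGroup n R) (z i : n) :
    ∃ t ∈ rowTransvections n R, IsUnit ((t * g).1 z i) ∧ ∀ j ≠ z, (t * g).1 j = g.1 j := by
  set w : n → R := (g⁻¹).1 i
  have hw : w ᵥ* g.1 = Pi.single i 1 := by
    rw [← mul_apply_eq_vecMul, ← Matrix.SpecialLinearGroup.coe_mul, inv_mul_cancel,
      Matrix.SpecialLinearGroup.coe_one, one_row_eq_single]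
  obtain ⟨x, hx⟩ := hR (g.1 z i) (1 - w z * g.1 z i) ⟨w z, 1, by ring⟩
  obtain ⟨t, ht, htg⟩ := exists_mem_rowTransvections_mul g (p := z)
    (x := x • (w - Pi.single z (w z))) (by simp)
  refine ⟨t, ht, ?_, fun j hj ↦ by rw [htg, updateRow_ne hj]⟩
  rw [htg, updateRow_self, smul_vecMul, sub_vecMul, hw, single_vecMul]
  simpa using hx

lemma exists_mul_apply_eq_one {g : Matrix.SpecialLinearGroup n R} {z i : n} (hzi : z ≠ i)
    (hg : IsUnit (g.1 z i)) :
    ∃ t ∈ rowTransvections n R, (t * g).1 i i = 1 ∧ ∀ j ≠ i, (t * g).1 j = g.1 j := by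
  obtain ⟨ε, hε⟩ := hg.exists_left_inv
  obtain ⟨t, ht, htg⟩ := exists_mem_rowTransvections_mul g (p := i)
    (x := Pi.single z ((1 - g.1 i i) * ε)) (by simp [hzi.symm])
  refine ⟨t, ht, ?_, fun j hj ↦ by rw [htg, updateRow_ne hj]⟩
  rw [htg, updateRow_self, single_vecMul]
  simp [mul_assoc, hε]

lemma exists_mul_row_eq_single {g : Matrix.SpecialLinearGroup n R} {i : n} (hg : g.1 i i = 1) :
    ∃ t ∈ rowTransvections n R, (g * t).1 i = Pi.single i 1 ∧
      ∀ j, g.1 j i = 0 → (g * t).1 j = g.1 j := by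
  obtain ⟨t, ht, htx⟩ := exists_mem_rowTransvections (p := i) (x := Pi.single i 1 - g.1 i)
    (by simp [hg])
  refine ⟨t, ht, ?_, fun j hj ↦ ?_⟩ <;>
    rw [Matrix.SpecialLinearGroup.coe_mul, htx, mul_one_add_vecMulVec_single_apply]
  · simp [hg]
  · simp [hj]

lemma mem_rowTransvections_of_rows {g : Matrix.SpecialLinearGroup n R} {i : n}
    (hg : ∀ j ≠ i, g.1 j = Pi.single j 1) : g ∈ rowTransvections n R := by
  have hgi : g.1 = 1 + vecMulVec (Pi.single i 1) (g.1 i - Pi.single i 1) := by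
    rw [← mul_one (1 + _), one_add_vecMulVec_single_mul, vecMul_one, one_row_eq_single,
      add_sub_cancel]
    funext j
    by_cases hj : j = i
    · rw [hj, updateRow_self]
    · rw [updateRow_ne hj, hg j hj, one_row_eq_single]
  refine ⟨i, _, ?_, hgi⟩
  have hdet := g.det_coe
  rw [hgi, det_one_add_vecMulVec] at hdet
  simpa [sub_eq_zero] using hdet

lemma HasStableRankOne.exists_mul_mul_row_eq_single (hR : HasStableRankOne R)
    (g : Matrix.SpecialLinearGroup n R) {z i : n} (hzi : z ≠ i) :
    ∃ t₁ ∈ rowTransvections n R, ∃ t₂ ∈ rowTransvections n R, ∃ t₃ ∈ rowTransvections n R,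
      (t₂ * (t₁ * g) * t₃).1 i = Pi.single i 1 ∧
      ∀ j, j ≠ z → j ≠ i → g.1 j i = 0 → (t₂ * (t₁ * g) * t₃).1 j = g.1 j := by
  obtain ⟨t₁, ht₁, hunit, h₁⟩ := hR.exists_isUnit_mul_apply g z i
  obtain ⟨t₂, ht₂, hone, h₂⟩ := exists_mul_apply_eq_one hzi hunit
  obtain ⟨t₃, ht₃, hrow, h₃⟩ := exists_mul_row_eq_single hone
  refine ⟨t₁, ht₁, t₂, ht₂, t₃, ht₃, hrow, fun j hjz hji hj ↦ ?_⟩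
  have hj₂ : (t₂ * (t₁ * g)).1 j = g.1 j := (h₂ j hji).trans (h₁ j hjz)
  rw [h₃ j (by rw [hj₂, hj]), hj₂]

lemma HasStableRankOne.mem_cayleyBall_of_rows (hR : HasStableRankOne R) (s : Finset n)
    {g : Matrix.SpecialLinearGroup n R} (hg : ∀ j ∉ s, g.1 j = Pi.single j 1) :
    g ∈ cayleyBall (rowTransvections n R) (3 * s.card) := by
  induction s using Finset.induction_on generalizing g with
  | empty =>
    obtain rfl : g = 1 := Subtype.ext <| funext fun j ↦
      (hg j (Finset.notMem_empty j)).trans (one_row_eq_single j).symm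
    exact cayleyBall.one_mem
  | insert i s hi ih =>
    simp only [Finset.mem_insert, not_or] at hg
    rw [Finset.card_insert_of_notMem hi]
    obtain rfl | ⟨z, hz⟩ := s.eq_empty_or_nonempty
    · have hgT := mem_rowTransvections_of_rows fun j hj ↦ hg j ⟨hj, Finset.notMem_empty j⟩
      exact cayleyBall.mono (by simp) (cayleyBall.of_mem hgT)
    · obtain ⟨t₁, ht₁, t₂, ht₂, t₃, ht₃, hrow, hrows⟩ :=
        hR.exists_mul_mul_row_eq_single g (ne_of_mem_of_not_mem hz hi)
      have hmem := ih fun j hj ↦ by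
        by_cases hji : j = i
        · exact hji ▸ hrow
        · have hgj := hg j ⟨hji, hj⟩
          rw [hrows j (ne_of_mem_of_not_mem hz hj).symm hji (by simp [hgj, Ne.symm hji]), hgj]
      have hprod : g = t₁⁻¹ * (t₂⁻¹ * (t₂ * (t₁ * g) * t₃)) * t₃⁻¹ := by group
      have hball := fun {t} (ht : t ∈ rowTransvections n R) ↦
        cayleyBall.inv_mem (cayleyBall.of_mem ht)
      rw [hprod]
      exact cayleyBall.mono (by omega) (cayleyBall.mul_mem
        (cayleyBall.mul_mem (hball ht₁) (cayleyBall.mul_mem (hball ht₂) hmem)) (hball ht₃))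

theorem HasStableRankOne.mem_cayleyBall_rowTransvections (hR : HasStableRankOne R)
    (g : Matrix.SpecialLinearGroup n R) :
    g ∈ cayleyBall (rowTransvections n R) (3 * Fintype.card n) :=
  hR.mem_cayleyBall_of_rows Finset.univ fun j hj ↦ absurd (Finset.mem_univ j) hj

end Elimination

section VectorActions

lemma vecMulVec_sum {ι m n R : Type*} [NonUnitalNonAssocSemiring R] (s : Finset ι) (u : m → R)
    (f : ι → n → R) : vecMulVec u (∑ i ∈ s, f i) = ∑ i ∈ s, vecMulVec u (f i) := by
  ext
  simp only [vecMulVec_apply, Finset.sum_apply, Finset.mul_sum, Matrix.sum_apply]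

variable {n R : Type*} [Fintype n] [DecidableEq n] [CommRing R]

lemma one_add_vecMulVec_mulVec (u w v : n → R) :
    (1 + vecMulVec u w) *ᵥ v = v + (w ⬝ᵥ v) • u := by
  rw [add_mulVec, one_mulVec, vecMulVec_mulVec, op_smul_eq_smul]

lemma vecMul_one_add_vecMulVec (u w v : n → R) :
    v ᵥ* (1 + vecMulVec u w) = v + (v ⬝ᵥ u) • w := by
  rw [vecMul_add, vecMul_one, vecMul_vecMulVec]

variable (g : Matrix.SpecialLinearGroup n R) (v : n → R)

lemma inv_mulVec_mulVec : (g⁻¹).1 *ᵥ (g.1 *ᵥ v) = v := by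
  rw [mulVec_mulVec, ← Matrix.SpecialLinearGroup.coe_mul, inv_mul_cancel,
    Matrix.SpecialLinearGroup.coe_one, one_mulVec]

lemma vecMul_vecMul_inv : v ᵥ* g.1 ᵥ* (g⁻¹).1 = v := by
  rw [vecMul_vecMul, ← Matrix.SpecialLinearGroup.coe_mul, mul_inv_cancel,
    Matrix.SpecialLinearGroup.coe_one, vecMul_one]

lemma vecMul_inv_vecMul : v ᵥ* (g⁻¹).1 ᵥ* g.1 = v := by
  rw [vecMul_vecMul, ← Matrix.SpecialLinearGroup.coe_mul, inv_mul_cancel,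
    Matrix.SpecialLinearGroup.coe_one, vecMul_one]

end VectorActions

section UnipotentBall

variable {n R : Type*} [Fintype n] [DecidableEq n] [CommRing R]

/-- The matrices `X` such that `1 + X` lies in the Cayley ball of radius `m` with respect to `S`.
On families with vanishing products, adding such `X` amounts to multiplying the `1 + X`. -/
def unipotentBall (S : Set (Matrix.SpecialLinearGroup n R)) (m : ℕ) : Set (Matrix n n R) :=
  {X | ∃ g ∈ cayleyBall S m, g.1 = 1 + X}

namespace unipotentBall

variable {S : Set (Matrix.SpecialLinearGroup n R)} {g : Matrix.SpecialLinearGroup n R}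
  {X Y : Matrix n n R} {u u' w w' : n → R} {a b m : ℕ}

lemma zero_mem : 0 ∈ unipotentBall S m :=
  ⟨1, cayleyBall.one_mem, (add_zero 1).symm⟩

lemma mono (hab : a ≤ b) : unipotentBall S a ⊆ unipotentBall S b :=
  fun _ ⟨g, hg, hgX⟩ ↦ ⟨g, cayleyBall.mono hab hg, hgX⟩

lemma add_mem (hXY : X * Y = 0) (hX : X ∈ unipotentBall S a) (hY : Y ∈ unipotentBall S b) :
    X + Y ∈ unipotentBall S (a + b) := by
  obtain ⟨g, hg, hgX⟩ := hX
  obtain ⟨h, hh, hhY⟩ := hY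
  refine ⟨g * h, cayleyBall.mul_mem hg hh, ?_⟩
  rw [Matrix.SpecialLinearGroup.coe_mul, hgX, hhY, add_mul, one_mul, mul_add, mul_one, hXY]
  abel

lemma neg_mem (hXX : X * X = 0) (hX : X ∈ unipotentBall S m) : -X ∈ unipotentBall S m := by
  obtain ⟨g, hg, hgX⟩ := hX
  refine ⟨g⁻¹, cayleyBall.inv_mem hg, ?_⟩
  have hcancel : g.1 * (1 + -X) = 1 := by
    rw [hgX, mul_add, mul_one, mul_neg, add_mul, one_mul, hXX, add_zero, add_neg_cancel_right]
  calc (g⁻¹).1 = (g⁻¹).1 * (g.1 * (1 + -X)) := by rw [hcancel, mul_one]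
    _ = (g⁻¹ * g).1 * (1 + -X) := (mul_assoc _ _ _).symm
    _ = 1 + -X := by rw [inv_mul_cancel, Matrix.SpecialLinearGroup.coe_one, one_mul]

lemma conj_mem (hg : g ∈ cayleyBall S a) (hX : X ∈ unipotentBall S b) :
    g.1 * X * (g⁻¹).1 ∈ unipotentBall S (2 * a + b) := by
  obtain ⟨h, hh, hhX⟩ := hX
  refine ⟨g * h * g⁻¹, cayleyBall.mono (by omega) (cayleyBall.mul_mem (cayleyBall.mul_mem hg hh)
    (cayleyBall.inv_mem hg)), ?_⟩
  rw [Matrix.SpecialLinearGroup.coe_mul, Matrix.SpecialLinearGroup.coe_mul, hhX, mul_add, mul_one,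
    add_mul, ← Matrix.SpecialLinearGroup.coe_mul, mul_inv_cancel, Matrix.SpecialLinearGroup.coe_one]

lemma conj_vecMulVec_mem (hg : g ∈ cayleyBall S a) (hu : g.1 *ᵥ u = u') (hw : w' ᵥ* g.1 = w)
    (h : vecMulVec u w ∈ unipotentBall S b) : vecMulVec u' w' ∈ unipotentBall S (2 * a + b) := by
  convert conj_mem hg h using 1
  rw [mul_vecMulVec, vecMulVec_mul, hu, ← hw, vecMul_vecMul_inv]

lemma inv_conj_vecMulVec_mem (hg : g ∈ cayleyBall S a) (hu : g.1 *ᵥ u' = u) (hw : w ᵥ* g.1 = w')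
    (h : vecMulVec u w ∈ unipotentBall S b) : vecMulVec u' w' ∈ unipotentBall S (2 * a + b) :=
  conj_vecMulVec_mem (cayleyBall.inv_mem hg) (hu ▸ inv_mulVec_mulVec g u')
    (hw ▸ vecMul_vecMul_inv g w) h

-- Horner's scheme: the sum is `g * (X 0 + Z) * g⁻¹` for the analogous sum `Z` over `X (· + 1)`.
lemma sum_conj_mem (hg : g ∈ cayleyBall S a) {X : ℕ → Matrix n n R}
    (hX : ∀ j, X j ∈ unipotentBall S b)
    (hX₀ : ∀ i j k, 0 < k → k < m → X i * ((g ^ k)⁻¹).1 * X j = 0) :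
    ∑ j ∈ Finset.range m, (g ^ (j + 1)).1 * X j * ((g ^ (j + 1))⁻¹).1 ∈
      unipotentBall S (m * (2 * a + b)) := by
  induction m generalizing X with
  | zero => exact mono (Nat.zero_le _) zero_mem
  | succ m ih =>
    set Z := ∑ j ∈ Finset.range m, (g ^ (j + 1)).1 * X (j + 1) * ((g ^ (j + 1))⁻¹).1
    have hZ : Z ∈ unipotentBall S (m * (2 * a + b)) :=
      ih (fun j ↦ hX (j + 1)) fun i j k hk hkm ↦ hX₀ _ _ k hk (by omega)
    have hZX : Z * X 0 = 0 := by
      rw [Finset.sum_mul]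
      refine Finset.sum_eq_zero fun j hj ↦ ?_
      rw [Matrix.mul_assoc, Matrix.mul_assoc, ← Matrix.mul_assoc (X (j + 1)),
        hX₀ _ _ _ j.succ_pos (by simpa using hj), Matrix.mul_zero]
    have hsum : ∑ j ∈ Finset.range (m + 1), (g ^ (j + 1)).1 * X j * ((g ^ (j + 1))⁻¹).1 =
        g.1 * (Z + X 0) * (g⁻¹).1 := by
      rw [Finset.sum_range_succ', mul_add, add_mul, Finset.mul_sum, Finset.sum_mul, zero_add,
        pow_one]
      congr 1
      refine Finset.sum_congr rfl fun j _ ↦ ?_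
      rw [pow_succ' g (j + 1), _root_.mul_inv_rev, Matrix.SpecialLinearGroup.coe_mul,
        Matrix.SpecialLinearGroup.coe_mul]
      simp only [Matrix.mul_assoc]
    rw [hsum]
    exact mono (by linarith) (conj_mem hg (add_mem hZX hZ (hX 0)))

end unipotentBall

end UnipotentBall

section Lucas

/-- The Lucas numbers `2, 1, 3, 4, 7, …`. Those of even index are the traces of the powers of a
matrix of determinant `1` and trace `3`. -/
def lucas : ℕ → ℕ
  | 0 => 2
  | 1 => 1
  | m + 2 => lucas m + lucas (m + 1)

lemma lucas_add_two (m : ℕ) : lucas (m + 2) = lucas m + lucas (m + 1) := rfl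

lemma lucas_even_add_two (m : ℕ) :
    lucas (2 * (m + 2)) + lucas (2 * m) = 3 * lucas (2 * (m + 1)) := by
  have h₂ := lucas_add_two (2 * m)
  have h₃ := lucas_add_two (2 * m + 1)
  have h₄ := lucas_add_two (2 * m + 2)
  grind

lemma lucas_even_succ_le (m : ℕ) : lucas (2 * (m + 1)) ≤ 3 * lucas (2 * m) := by
  cases m with
  | zero => decide
  | succ m => exact (Nat.le_add_right _ _).trans (lucas_even_add_two m).le

lemma two_pow_le_lucas (m : ℕ) : 2 ^ m ≤ lucas (2 * m) := by
  induction m using Nat.twoStepInduction with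
  | zero | one => decide
  | more m _ ih =>
    have hrec := lucas_even_add_two m
    have hmono : lucas (2 * m) ≤ lucas (2 * (m + 1)) := Nat.le_add_right _ _
    rw [pow_succ]
    omega

lemma exists_lucas_digits (m : ℕ) {x : ℕ} (hx : x < lucas (2 * (m + 1))) :
    ∃ d : ℕ → ℕ, (∀ j, d j ≤ 2) ∧
      x = d 0 + ∑ j ∈ Finset.range m, lucas (2 * (j + 1)) * d (j + 1) := by
  induction m generalizing x with
  | zero => exact ⟨fun _ ↦ x, fun _ ↦ Nat.le_of_lt_succ hx, rfl⟩
  | succ m ih =>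
    set L := lucas (2 * (m + 1))
    have hL : 0 < L := (Nat.two_pow_pos _).trans_le (two_pow_le_lucas _)
    have hq : x / L < 3 := Nat.div_lt_of_lt_mul (by linarith [lucas_even_succ_le (m + 1)])
    obtain ⟨d, hd, hsum⟩ := ih (Nat.mod_lt x hL)
    refine ⟨Function.update d (m + 1) (x / L), fun j ↦ ?_, ?_⟩
    · obtain rfl | hj := eq_or_ne j (m + 1)
      · rw [Function.update_self]
        exact Nat.le_of_lt_succ hq
      · rw [Function.update_of_ne hj]
        exact hd j
    · have hlow : ∑ j ∈ Finset.range m,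
          lucas (2 * (j + 1)) * Function.update d (m + 1) (x / L) (j + 1) =
          ∑ j ∈ Finset.range m, lucas (2 * (j + 1)) * d (j + 1) :=
        Finset.sum_congr rfl fun j hj ↦ by
          rw [Function.update_of_ne (by simpa using (Finset.mem_range.1 hj).ne)]
      rw [Finset.sum_range_succ, hlow, Function.update_of_ne (by simp), Function.update_self,
        ← add_assoc, ← hsum, Nat.mod_add_div]

lemma pow_smul_add_inv_pow_smul {G V : Type*} [Group G] [AddCommGroup V] [DistribMulAction G V]
    {g : G} {u : V} (hu : g • u + g⁻¹ • u = 3 • u) (m : ℕ) :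
    g ^ m • u + g⁻¹ ^ m • u = lucas (2 * m) • u := by
  induction m using Nat.twoStepInduction with
  | zero => simp [lucas, two_nsmul]
  | one => simpa [lucas] using hu
  | more m ih₀ ih₁ =>
    have hrec (h : G) : (h * g) • u + (h * g⁻¹) • u = 3 • h • u := by
      rw [mul_smul, mul_smul, ← smul_add, hu, smul_comm]
    have hpos : g ^ (m + 2) • u + g ^ m • u = 3 • g ^ (m + 1) • u := by
      simpa [pow_succ] using hrec (g ^ (m + 1))
    have hneg : g⁻¹ ^ m • u + g⁻¹ ^ (m + 2) • u = 3 • g⁻¹ ^ (m + 1) • u := by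
      simpa [pow_succ] using hrec (g⁻¹ ^ (m + 1))
    refine add_right_cancel (b := lucas (2 * m) • u) ?_
    rw [← add_smul, lucas_even_add_two, mul_smul, ← ih₁, ← ih₀, smul_add, ← hpos, ← hneg]
    abel

end Lucas

section LucasSums

variable {n R : Type*} [Fintype n] [DecidableEq n] [CommRing R]
  {g : Matrix.SpecialLinearGroup n R} {w : n → R}

lemma vecMul_pow_eq_self (hw : w ᵥ* g.1 = w) (k : ℕ) : w ᵥ* (g ^ k).1 = w := by
  induction k with
  | zero => rw [pow_zero, Matrix.SpecialLinearGroup.coe_one, vecMul_one]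
  | succ k ih => rw [pow_succ, Matrix.SpecialLinearGroup.coe_mul, ← vecMul_vecMul, ih, hw]

lemma vecMul_inv_eq_self (hw : w ᵥ* g.1 = w) : w ᵥ* (g⁻¹).1 = w := by
  conv_lhs => rw [← hw, vecMul_vecMul_inv]

namespace unipotentBall

variable {S : Set (Matrix.SpecialLinearGroup n R)} {u : n → R} {d : ℕ → n → R} {a b m : ℕ}

lemma sum_vecMulVec_pow_smul_mem (hg : g ∈ cayleyBall S a)
    (hd : ∀ j, vecMulVec u (d j) ∈ unipotentBall S b) (hdg : ∀ j, d j ᵥ* g.1 = d j)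
    (hdu : ∀ j, d j ⬝ᵥ u = 0) :
    ∑ j ∈ Finset.range m, vecMulVec (g ^ (j + 1) • u) (d j) ∈
      unipotentBall S (m * (2 * a + b)) := by
  have hdg' (j k : ℕ) : d j ᵥ* ((g ^ k)⁻¹).1 = d j :=
    vecMul_inv_eq_self (vecMul_pow_eq_self (hdg j) k)
  convert sum_conj_mem hg hd fun i j k _ _ ↦ ?_ using 2 with j
  · rw [mul_vecMulVec, vecMulVec_mul, hdg', Matrix.SpecialLinearGroup.smul_def,
      Matrix.smul_eq_mulVec]
  · rw [vecMulVec_mul, hdg', vecMulVec_mul_vecMulVec, hdu, zero_smul, vecMulVec_zero]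

theorem vecMulVec_lucas_sum_mem (hg : g ∈ cayleyBall S a) (hu : g • u + g⁻¹ • u = 3 • u)
    (hd : ∀ j, vecMulVec u (d j) ∈ unipotentBall S b) (hdg : ∀ j, d j ᵥ* g.1 = d j)
    (hdu : ∀ j, d j ⬝ᵥ u = 0) :
    vecMulVec u (d 0 + ∑ j ∈ Finset.range m, lucas (2 * (j + 1)) • d (j + 1)) ∈
      unipotentBall S (b + 2 * (m * (2 * a + b))) := by
  have hdg' (j : ℕ) : d j ᵥ* (g⁻¹).1 = d j := vecMul_inv_eq_self (hdg j)
  have hpos := sum_vecMulVec_pow_smul_mem (m := m) hg (fun j ↦ hd (j + 1)) (fun j ↦ hdg (j + 1))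
    fun j ↦ hdu (j + 1)
  have hneg := sum_vecMulVec_pow_smul_mem (m := m) (cayleyBall.inv_mem hg) (fun j ↦ hd (j + 1))
    (fun j ↦ hdg' (j + 1)) fun j ↦ hdu (j + 1)
  have hdot {h : Matrix.SpecialLinearGroup n R} (hh : ∀ j, d j ᵥ* h.1 = d j) (i k : ℕ) :
      d i ⬝ᵥ (h ^ k • u) = 0 := by
    rw [Matrix.SpecialLinearGroup.smul_def, Matrix.smul_eq_mulVec, dotProduct_mulVec,
      vecMul_pow_eq_self (hh i), hdu]
  have hsum : vecMulVec u (∑ j ∈ Finset.range m, lucas (2 * (j + 1)) • d (j + 1)) =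
      ∑ j ∈ Finset.range m, vecMulVec (g ^ (j + 1) • u) (d (j + 1)) +
      ∑ j ∈ Finset.range m, vecMulVec (g⁻¹ ^ (j + 1) • u) (d (j + 1)) := by
    simp only [vecMulVec_sum, ← Finset.sum_add_distrib, ← add_vecMulVec,
      pow_smul_add_inv_pow_smul hu, smul_vecMulVec, vecMulVec_smul]
  rw [vecMulVec_add, hsum]
  refine mono (by linarith) (add_mem ?_ (hd 0) (add_mem ?_ hpos hneg))
  · simp only [mul_add, Finset.mul_sum, vecMulVec_mul_vecMulVec, hdot hdg, hdot hdg', zero_smul,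
      vecMulVec_zero, Finset.sum_const_zero, add_zero]
  · simp only [Finset.sum_mul_sum, vecMulVec_mul_vecMulVec, hdot hdg', zero_smul, vecMulVec_zero,
      Finset.sum_const_zero]

end unipotentBall

end LucasSums

section StandardGenerators

/-- The standard basis vector at the position `i`, indexed by a natural number so that shifted
positions need no bound; it is `0` if `n ≤ i`. -/
def natSingle {n : ℕ} {R : Type*} [Zero R] [One R] (i : ℕ) : Fin n → R :=
  fun j ↦ if (j : ℕ) = i then 1 else 0

local notation "𝕖" => natSingle

section NatSingle

variable {n : ℕ} {R : Type*}

lemma natSingle_eq_single [Zero R] [One R] {i : ℕ} (hi : i < n) :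
    (𝕖 i : Fin n → R) = Pi.single ⟨i, hi⟩ 1 := by
  ext j
  simp [natSingle, Pi.single_apply, Fin.ext_iff]

variable [CommRing R]

lemma dotProduct_natSingle {i : ℕ} (hi : i < n) (v : Fin n → R) : v ⬝ᵥ 𝕖 i = v ⟨i, hi⟩ := by
  rw [natSingle_eq_single hi, dotProduct_single_one]

lemma natSingle_dotProduct_self {i : ℕ} (hi : i < n) : (𝕖 i : Fin n → R) ⬝ᵥ 𝕖 i = 1 := by
  simp [dotProduct_natSingle hi, natSingle]

lemma natSingle_dotProduct_of_ne {i j : ℕ} (hij : i ≠ j) : (𝕖 i : Fin n → R) ⬝ᵥ 𝕖 j = 0 := by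
  simp only [dotProduct, natSingle, mul_ite, mul_one, mul_zero]
  exact Finset.sum_eq_zero fun l _ ↦ by grind

lemma sum_smul_natSingle_dotProduct_of_lt {i k m : ℕ} (hik : i < k) (c : ℕ → R) :
    (∑ j ∈ Finset.range m, c j • (𝕖 (j + k) : Fin n → R)) ⬝ᵥ 𝕖 i = 0 := by
  rw [sum_dotProduct]
  refine Finset.sum_eq_zero fun j _ ↦ ?_
  rw [smul_dotProduct, natSingle_dotProduct_of_ne (by omega), smul_zero]

lemma sum_dotProduct_smul_natSingle (v : Fin n → R) :
    ∑ i ∈ Finset.range n, (v ⬝ᵥ 𝕖 i) • 𝕖 i = v := by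
  rw [Finset.sum_range]
  simp [natSingle_eq_single, ← Pi.single_smul, Finset.univ_sum_single]

lemma sum_dotProduct_smul_natSingle_add {k : ℕ} {v : Fin n → R} (hv : ∀ i < k, v ⬝ᵥ 𝕖 i = 0) :
    ∑ j ∈ Finset.range (n - k), (v ⬝ᵥ 𝕖 (j + k)) • 𝕖 (j + k) = v := by
  conv_rhs => rw [← sum_dotProduct_smul_natSingle v]
  simp only [add_comm _ k]
  rw [← Finset.sum_Ico_eq_sum_range (fun i ↦ (v ⬝ᵥ 𝕖 i) • 𝕖 i), Finset.range_eq_Ico]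
  refine Finset.sum_subset (Finset.Ico_subset_Ico_left k.zero_le) fun i hi hik ↦ ?_
  rw [hv i (by grind), zero_smul]

end NatSingle

section Bmat

lemma Amat_eq (n : ℕ) (R : Type) [CommRing R] : Amat n R = 1 + vecMulVec (𝕖 0) (𝕖 1) := by
  ext i j
  simp only [Amat, of_apply, Matrix.add_apply, one_apply, vecMulVec_apply, natSingle, Fin.ext_iff]
  grind

variable {n : ℕ} {R : Type} [CommRing R] {i k : ℕ}

lemma natSingle_vecMul_Bmat (hi : i + 1 < n) : 𝕖 i ᵥ* Bmat n R = 𝕖 (i + 1) := by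
  rw [natSingle_eq_single (Nat.lt_of_succ_lt hi), single_one_vecMul]
  ext j
  simp only [row_apply, Bmat, of_apply, natSingle]
  grind

lemma natSingle_last_vecMul_Bmat (hn : 0 < n) :
    𝕖 (n - 1) ᵥ* Bmat n R = (-1 : R) ^ (n - 1) • 𝕖 0 := by
  rw [natSingle_eq_single (Nat.sub_one_lt_of_lt hn), single_one_vecMul]
  ext j
  simp only [row_apply, Bmat, of_apply, natSingle, Pi.smul_apply, smul_eq_mul]
  grind

lemma Bmat_mulVec_natSingle (hi : i + 1 < n) : Bmat n R *ᵥ 𝕖 (i + 1) = 𝕖 i := by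
  rw [natSingle_eq_single hi, mulVec_single_one]
  ext j
  simp only [col_apply, Bmat, of_apply, natSingle]
  grind

variable {B : Matrix.SpecialLinearGroup (Fin n) R}

lemma natSingle_vecMul_pow (hB : B.1 = Bmat n R) (hik : i + k < n) :
    𝕖 i ᵥ* (B ^ k).1 = 𝕖 (i + k) := by
  induction k with
  | zero => rw [pow_zero, Matrix.SpecialLinearGroup.coe_one, vecMul_one, add_zero]
  | succ k ih =>
    rw [pow_succ, Matrix.SpecialLinearGroup.coe_mul, ← vecMul_vecMul, ih (by omega), hB,
      natSingle_vecMul_Bmat (i := i + k) hik, add_assoc]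

lemma pow_mulVec_natSingle (hB : B.1 = Bmat n R) (hik : i + k < n) :
    (B ^ k).1 *ᵥ 𝕖 (i + k) = 𝕖 i := by
  induction k with
  | zero => rw [pow_zero, Matrix.SpecialLinearGroup.coe_one, one_mulVec, add_zero]
  | succ k ih =>
    rw [pow_succ, Matrix.SpecialLinearGroup.coe_mul, ← mulVec_mulVec, hB, ← add_assoc,
      Bmat_mulVec_natSingle (i := i + k) hik, ih (by omega)]

lemma inv_pow_mulVec_natSingle (hB : B.1 = Bmat n R) (hik : i + k < n) :
    ((B ^ k)⁻¹).1 *ᵥ 𝕖 i = 𝕖 (i + k) := by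
  rw [← pow_mulVec_natSingle hB hik, inv_mulVec_mulVec]

end Bmat

section StandardPair

variable {n : ℕ} {R : Type} [CommRing R] {A B : Matrix.SpecialLinearGroup (Fin n) R}

/-- `A` and `B` are the two standard generators of `SL n R`. -/
structure IsStandardPair (A B : Matrix.SpecialLinearGroup (Fin n) R) : Prop where
  left : A.1 = Amat n R
  right : B.1 = Bmat n R

namespace IsStandardPair

lemma vecMulVec_natSingle_zero_one_mem (h : IsStandardPair A B) :
    vecMulVec (𝕖 0) (𝕖 1) ∈ unipotentBall {A, B} 1 :=
  ⟨A, cayleyBall.of_mem (Set.mem_insert A _), h.left.trans (Amat_eq n R)⟩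

lemma smul_vecMulVec_natSingle_zero_one_mem (h : IsStandardPair A B) {c : R}
    (hc : c = -1 ∨ c = 0 ∨ c = 1) : c • vecMulVec (𝕖 0) (𝕖 1) ∈ unipotentBall {A, B} 1 := by
  obtain rfl | rfl | rfl := hc
  · rw [neg_one_smul]
    refine unipotentBall.neg_mem ?_ h.vecMulVec_natSingle_zero_one_mem
    rw [vecMulVec_mul_vecMulVec, natSingle_dotProduct_of_ne one_ne_zero, zero_smul, vecMulVec_zero]
  · rw [zero_smul]
    exact unipotentBall.zero_mem
  · rw [one_smul]
    exact h.vecMulVec_natSingle_zero_one_mem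

lemma sum_superdiagonal_mem (h : IsStandardPair A B) {c : ℕ → R}
    (hc : ∀ j, c j = -1 ∨ c j = 0 ∨ c j = 1) :
    ∑ j ∈ Finset.range (n - 2), vecMulVec (𝕖 (j + 1)) (c j • 𝕖 (j + 2)) ∈
      unipotentBall {A, B} ((n - 2) * 3) := by
  convert unipotentBall.sum_conj_mem (cayleyBall.inv_mem cayleyBall.right_mem_pair)
    (fun j ↦ h.smul_vecMulVec_natSingle_zero_one_mem (hc j)) fun i j k hk hkn ↦ ?_ using 2 with j hj
  · rw [Finset.mem_range] at hj
    rw [inv_pow, inv_inv, ← vecMulVec_smul, mul_vecMulVec, vecMulVec_mul, smul_vecMul,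
      inv_pow_mulVec_natSingle h.right (by omega), natSingle_vecMul_pow h.right (by omega),
      zero_add, add_comm 1]
  · have hvec : 𝕖 1 ᵥ* ((B⁻¹ ^ k)⁻¹).1 = 𝕖 (1 + k) := by
      rw [inv_pow, inv_inv, natSingle_vecMul_pow h.right (by omega)]
    rw [Matrix.smul_mul, Matrix.smul_mul, Matrix.mul_smul, vecMulVec_mul, hvec,
      vecMulVec_mul_vecMulVec, natSingle_dotProduct_of_ne (by omega), zero_smul, vecMulVec_zero,
      smul_zero, smul_zero]

-- The row vector `(0, 1, …, 1)` turns the entries of a superdiagonal into those of a row.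
lemma exists_sum_natSingle_vecMul_eq (h : IsStandardPair A B) (hn : 2 ≤ n) {c : ℕ → R}
    (hc : ∀ j, c j = -1 ∨ c j = 0 ∨ c j = 1) :
    ∃ g ∈ cayleyBall {A, B} (3 * n - 6), g.1 *ᵥ 𝕖 0 = 𝕖 0 ∧
      (∑ j ∈ Finset.range (n - 1), 𝕖 (j + 1)) ᵥ* g.1 =
        𝕖 1 + ∑ j ∈ Finset.range (n - 2), (1 + c j) • 𝕖 (j + 2) := by
  obtain ⟨g, hg, hgc⟩ := h.sum_superdiagonal_mem hc
  refine ⟨g, cayleyBall.mono (by omega) hg, ?_, ?_⟩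
  · rw [hgc, add_mulVec, one_mulVec, sum_mulVec, add_eq_left]
    refine Finset.sum_eq_zero fun j _ ↦ ?_
    rw [vecMulVec_mulVec, smul_dotProduct, natSingle_dotProduct_of_ne (by omega), smul_zero,
      MulOpposite.op_zero, zero_smul]
  · have hterm : ∀ j ∈ Finset.range (n - 2),
        (∑ i ∈ Finset.range (n - 1), 𝕖 (i + 1)) ᵥ* vecMulVec (𝕖 (j + 1)) (c j • 𝕖 (j + 2)) =
          c j • (𝕖 (j + 2) : Fin n → R) := fun j hj ↦ by
      rw [Finset.mem_range] at hj
      have hne : ∀ i ∈ Finset.range (n - 1), i ≠ j → (𝕖 (i + 1) : Fin n → R) ⬝ᵥ 𝕖 (j + 1) = 0 :=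
        fun i _ hij ↦ natSingle_dotProduct_of_ne (by omega)
      rw [vecMul_vecMulVec, sum_dotProduct, Finset.sum_eq_single_of_mem j (by grind) hne,
        natSingle_dotProduct_self (i := j + 1) (by omega), one_smul]
    rw [hgc, vecMul_add, vecMul_one, vecMul_sum, Finset.sum_congr rfl hterm,
      show n - 1 = n - 2 + 1 by omega, Finset.sum_range_succ']
    simp only [add_smul, one_smul, Finset.sum_add_distrib, zero_add]
    abel

lemma vecMulVec_natSingle_zero_sum_mem (h : IsStandardPair A B) (hn : 2 ≤ n) :
    vecMulVec (𝕖 0) (∑ j ∈ Finset.range (n - 1), 𝕖 (j + 1)) ∈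
      unipotentBall {A, B} (2 * (3 * n - 6) + 1) := by
  obtain ⟨g, hg, hg₀, hgsum⟩ := h.exists_sum_natSingle_vecMul_eq hn (c := fun _ ↦ -1)
    fun _ ↦ Or.inl rfl
  refine unipotentBall.conj_vecMulVec_mem hg hg₀ ?_ h.vecMulVec_natSingle_zero_one_mem
  simpa using hgsum

lemma vecMulVec_natSingle_zero_digits_mem (h : IsStandardPair A B) (hn : 2 ≤ n) {d : ℕ → ℕ}
    (hd : ∀ j, d j ≤ 2) :
    vecMulVec (𝕖 0) (∑ j ∈ Finset.range (n - 2), (d j : R) • 𝕖 (j + 2)) ∈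
      unipotentBall {A, B} (12 * n) := by
  have hc : ∀ j, (d j : R) - 1 = -1 ∨ (d j : R) - 1 = 0 ∨ (d j : R) - 1 = 1 := fun j ↦ by
    have := hd j
    interval_cases d j <;> norm_num
  obtain ⟨g, hg, hg₀, hgsum⟩ := h.exists_sum_natSingle_vecMul_eq hn hc
  have hsum := unipotentBall.inv_conj_vecMulVec_mem hg hg₀ hgsum
    (h.vecMulVec_natSingle_zero_sum_mem hn)
  have hneg := h.smul_vecMulVec_natSingle_zero_one_mem (c := (-1 : R)) (Or.inl rfl)
  refine unipotentBall.mono (by omega) (?_ : _ ∈ unipotentBall {A, B}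
    (2 * (3 * n - 6) + (2 * (3 * n - 6) + 1) + 1))
  convert unipotentBall.add_mem ?_ hsum hneg using 1
  · simp only [add_sub_cancel, vecMulVec_add, neg_one_smul, add_neg_cancel_comm]
  · rw [Matrix.mul_smul, vecMulVec_mul_vecMulVec, add_dotProduct,
      natSingle_dotProduct_of_ne one_ne_zero, sum_smul_natSingle_dotProduct_of_lt two_pos, add_zero,
      zero_smul, vecMulVec_zero, smul_zero]

lemma vecMulVec_natSingle_one_zero_mem (h : IsStandardPair A B) (hn : 3 ≤ n) :
    vecMulVec (𝕖 1) (𝕖 0) ∈ unipotentBall {A, B} (12 * n + 2) := by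
  have hlast : vecMulVec (𝕖 0) (𝕖 (n - 1)) ∈ unipotentBall {A, B} (12 * n) := by
    convert h.vecMulVec_natSingle_zero_digits_mem (by omega)
      (d := fun j ↦ if j = n - 3 then 1 else 0) (by grind) using 2
    rw [Finset.sum_eq_single_of_mem (n - 3) (by grind) fun j _ hj ↦ by simp [hj]]
    simp [show n - 3 + 2 = n - 1 by omega]
  have hmem : vecMulVec (𝕖 1) ((-1 : R) ^ (n - 1) • 𝕖 0) ∈ unipotentBall {A, B} (12 * n + 2) := by
    rw [add_comm]
    refine unipotentBall.inv_conj_vecMulVec_mem cayleyBall.right_mem_pair ?_ ?_ hlast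
    · rw [h.right, Bmat_mulVec_natSingle (i := 0) (by omega)]
    · rw [h.right, natSingle_last_vecMul_Bmat (by omega)]
  obtain hsign | hsign := neg_one_pow_eq_or R (n - 1)
  · rwa [hsign, one_smul] at hmem
  · rw [hsign, neg_one_smul, vecMulVec_neg] at hmem
    rw [← neg_neg (vecMulVec (𝕖 1) (𝕖 0))]
    refine unipotentBall.neg_mem ?_ hmem
    rw [neg_mul_neg, vecMulVec_mul_vecMulVec, natSingle_dotProduct_of_ne zero_ne_one, zero_smul,
      vecMulVec_zero]

lemma vecMulVec_natSingle_two_one_mem (h : IsStandardPair A B) (hn : 3 ≤ n) :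
    vecMulVec (𝕖 2) (𝕖 1) ∈ unipotentBall {A, B} (12 * n + 4) := by
  refine unipotentBall.mono (by omega) (unipotentBall.inv_conj_vecMulVec_mem
    cayleyBall.right_mem_pair ?_ ?_ (h.vecMulVec_natSingle_one_zero_mem hn))
  · rw [h.right, Bmat_mulVec_natSingle (i := 1) (by omega)]
  · rw [h.right, natSingle_vecMul_Bmat (i := 0) (by omega)]

-- On the span of the first two basis vectors, `A * E` acts as `!![2, 1; 1, 1]`, of trace `3`.
lemma exists_add_inv_eq_three_smul (h : IsStandardPair A B) (hn : 3 ≤ n) :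
    ∃ g ∈ cayleyBall {A, B} (13 * n), g.1 *ᵥ 𝕖 0 + (g⁻¹).1 *ᵥ 𝕖 0 = 3 • 𝕖 0 ∧
      ∀ x, x ⬝ᵥ 𝕖 0 = 0 → x ⬝ᵥ 𝕖 1 = 0 → x ᵥ* g.1 = x := by
  obtain ⟨E, hE, hE₁⟩ := h.vecMulVec_natSingle_one_zero_mem hn
  have hA : A.1 = 1 + vecMulVec (𝕖 0) (𝕖 1) := h.left.trans (Amat_eq n R)
  have h₀₀ : (𝕖 0 : Fin n → R) ⬝ᵥ 𝕖 0 = 1 := natSingle_dotProduct_self (by omega)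
  have h₁₁ : (𝕖 1 : Fin n → R) ⬝ᵥ 𝕖 1 = 1 := natSingle_dotProduct_self (by omega)
  have h₀₁ : (𝕖 0 : Fin n → R) ⬝ᵥ 𝕖 1 = 0 := natSingle_dotProduct_of_ne zero_ne_one
  have h₁₀ : (𝕖 1 : Fin n → R) ⬝ᵥ 𝕖 0 = 0 := natSingle_dotProduct_of_ne one_ne_zero
  have hmulVec : ∀ v : Fin n → R, (A * E).1 *ᵥ v =
      v + (v ⬝ᵥ 𝕖 0) • 𝕖 1 + (v ⬝ᵥ 𝕖 1 + v ⬝ᵥ 𝕖 0) • 𝕖 0 := fun v ↦ by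
    rw [Matrix.SpecialLinearGroup.coe_mul, ← mulVec_mulVec, hA, hE₁, one_add_vecMulVec_mulVec,
      one_add_vecMulVec_mulVec, dotProduct_add, dotProduct_smul, h₁₁, dotProduct_comm _ v,
      dotProduct_comm _ v, smul_eq_mul, mul_one]
  have hzero : (A * E).1 *ᵥ 𝕖 0 = (2 : R) • 𝕖 0 + 𝕖 1 := by
    rw [hmulVec, h₀₀, h₀₁]
    module
  have hinv : ((A * E)⁻¹).1 *ᵥ 𝕖 0 = 𝕖 0 - 𝕖 1 := by
    have hpre : (A * E).1 *ᵥ (𝕖 0 - 𝕖 1) = 𝕖 0 := by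
      rw [hmulVec, sub_dotProduct, sub_dotProduct, h₀₀, h₁₀, h₀₁, h₁₁]
      module
    conv_lhs => rw [← hpre, inv_mulVec_mulVec]
  refine ⟨A * E, cayleyBall.mono (by omega) (cayleyBall.mul_mem
    (cayleyBall.of_mem (Set.mem_insert A _)) hE), ?_, fun x hx₀ hx₁ ↦ ?_⟩
  · rw [hzero, hinv]
    module
  · simp only [Matrix.SpecialLinearGroup.coe_mul, ← vecMul_vecMul, hA, hE₁,
      vecMul_one_add_vecMulVec, hx₀, hx₁, zero_smul, add_zero]

lemma vecMulVec_natSingle_zero_mem_of_lt_two (h : IsStandardPair A B) (hn : 3 ≤ n) {m : ℕ}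
    (hm : ∀ r : R, ∃ N : ℕ, N < lucas (2 * (m + 1)) ∧ (N : R) = r) {x : Fin n → R}
    (hx : ∀ i < 2, x ⬝ᵥ 𝕖 i = 0) :
    vecMulVec (𝕖 0) x ∈ unipotentBall {A, B} ((76 * m + 12) * n) := by
  choose N hN hNx using fun j ↦ hm (x ⬝ᵥ 𝕖 (j + 2))
  choose d hd hNd using fun j ↦ exists_lucas_digits m (hN j)
  let D (i : ℕ) : Fin n → R := ∑ j ∈ Finset.range (n - 2), (d j i : R) • 𝕖 (j + 2)
  have hD₀ (i : ℕ) : D i ⬝ᵥ 𝕖 0 = 0 :=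
    sum_smul_natSingle_dotProduct_of_lt two_pos fun j ↦ (d j i : R)
  have hD₁ (i : ℕ) : D i ⬝ᵥ 𝕖 1 = 0 :=
    sum_smul_natSingle_dotProduct_of_lt one_lt_two fun j ↦ (d j i : R)
  have hxD : x = D 0 + ∑ i ∈ Finset.range m, lucas (2 * (i + 1)) • D (i + 1) := by
    simp only [D, Finset.smul_sum]
    rw [Finset.sum_comm, ← Finset.sum_add_distrib]
    conv_lhs => rw [← sum_dotProduct_smul_natSingle_add hx]
    refine Finset.sum_congr rfl fun j _ ↦ ?_
    rw [← hNx j, hNd j]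
    push_cast
    simp only [add_smul, Finset.sum_smul, mul_smul, Nat.cast_smul_eq_nsmul]
  obtain ⟨g, hg, hg₀, hgx⟩ := h.exists_add_inv_eq_three_smul hn
  rw [hxD]
  exact unipotentBall.mono (by linarith) (unipotentBall.vecMulVec_lucas_sum_mem hg hg₀
    (fun i ↦ h.vecMulVec_natSingle_zero_digits_mem (by omega) fun j ↦ hd j i)
    (fun i ↦ hgx _ (hD₀ i) (hD₁ i)) hD₀)

-- Split `x` as `(0, 0, *, …, *)` plus `r • (0, 1, 1, 0, …, 0)`; the latter is conjugate to the
-- `(0, 0, r, 0, …, 0)` already treated.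
lemma vecMulVec_natSingle_zero_mem (h : IsStandardPair A B) (hn : 3 ≤ n) {m : ℕ}
    (hm : ∀ r : R, ∃ N : ℕ, N < lucas (2 * (m + 1)) ∧ (N : R) = r) {x : Fin n → R}
    (hx : x ⬝ᵥ 𝕖 0 = 0) :
    vecMulVec (𝕖 0) x ∈ unipotentBall {A, B} ((152 * m + 51) * n) := by
  obtain ⟨g, hg, hgC⟩ := h.vecMulVec_natSingle_two_one_mem hn
  set r := x ⬝ᵥ 𝕖 1
  have h₁₁ : (𝕖 1 : Fin n → R) ⬝ᵥ 𝕖 1 = 1 := natSingle_dotProduct_self (by omega)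
  have h₂₂ : (𝕖 2 : Fin n → R) ⬝ᵥ 𝕖 2 = 1 := natSingle_dotProduct_self (by omega)
  have h₁₀ : (𝕖 1 : Fin n → R) ⬝ᵥ 𝕖 0 = 0 := natSingle_dotProduct_of_ne one_ne_zero
  have h₂₀ : (𝕖 2 : Fin n → R) ⬝ᵥ 𝕖 0 = 0 := natSingle_dotProduct_of_ne two_ne_zero
  have h₂₁ : (𝕖 2 : Fin n → R) ⬝ᵥ 𝕖 1 = 0 := natSingle_dotProduct_of_ne (by omega)
  have hlow : vecMulVec (𝕖 0) (x - r • (𝕖 2 + 𝕖 1)) ∈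
      unipotentBall {A, B} ((76 * m + 12) * n) := by
    refine h.vecMulVec_natSingle_zero_mem_of_lt_two hn hm fun i hi ↦ ?_
    rw [sub_dotProduct, smul_dotProduct, add_dotProduct]
    interval_cases i
    · rw [hx, h₂₀, h₁₀, add_zero, smul_zero, sub_zero]
    · rw [h₂₁, h₁₁, zero_add, smul_eq_mul, mul_one, sub_self]
  have hmul : vecMulVec (𝕖 0) (r • (𝕖 2 + 𝕖 1)) ∈
      unipotentBall {A, B} (2 * (12 * n + 4) + (76 * m + 12) * n) := by
    refine unipotentBall.inv_conj_vecMulVec_mem hg ?_ ?_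
      (h.vecMulVec_natSingle_zero_mem_of_lt_two (x := r • 𝕖 2) hn hm fun i hi ↦ ?_)
    · rw [hgC, one_add_vecMulVec_mulVec, h₁₀, zero_smul, add_zero]
    · rw [smul_vecMul, hgC, vecMul_one_add_vecMulVec, h₂₂, one_smul]
    · rw [smul_dotProduct, natSingle_dotProduct_of_ne (by omega), smul_zero]
  rw [← sub_add_cancel x (r • (𝕖 2 + 𝕖 1)), vecMulVec_add]
  refine unipotentBall.mono (by linarith) (unipotentBall.add_mem ?_ hlow hmul)
  rw [vecMulVec_mul_vecMulVec, sub_dotProduct, smul_dotProduct, add_dotProduct, hx, h₂₀, h₁₀,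
    add_zero, smul_zero, sub_zero, zero_smul, vecMulVec_zero]

lemma rowTransvections_subset (h : IsStandardPair A B) (hn : 3 ≤ n) {m : ℕ}
    (hm : ∀ r : R, ∃ N : ℕ, N < lucas (2 * (m + 1)) ∧ (N : R) = r) :
    rowTransvections (Fin n) R ⊆ cayleyBall {A, B} ((152 * m + 53) * n) := by
  rintro t ⟨p, x, hx, ht⟩
  have hpow : B ^ (p : ℕ) ∈ cayleyBall {A, B} (p * 1) :=
    cayleyBall.pow_mem cayleyBall.right_mem_pair p
  have hw : x ᵥ* ((B ^ (p : ℕ))⁻¹).1 ⬝ᵥ 𝕖 0 = 0 := by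
    rw [← dotProduct_mulVec, inv_pow_mulVec_natSingle h.right (by omega), zero_add,
      dotProduct_natSingle p.2, hx]
  obtain ⟨g, hg, hgx⟩ := unipotentBall.inv_conj_vecMulVec_mem (u' := 𝕖 p) (w' := x) hpow
    (by rw [← pow_mulVec_natSingle h.right (i := 0) (k := p) (by omega), zero_add])
    (vecMul_inv_vecMul _ x) (h.vecMulVec_natSingle_zero_mem hn hm hw)
  rw [natSingle_eq_single p.2, ← ht] at hgx
  exact cayleyBall.mono (by linarith [p.2]) (Subtype.ext hgx ▸ hg)

theorem mem_cayleyBall (h : IsStandardPair A B) (hn : 3 ≤ n) (hR : HasStableRankOne R) {m : ℕ}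
    (hm : ∀ r : R, ∃ N : ℕ, N < lucas (2 * (m + 1)) ∧ (N : R) = r)
    (M : Matrix.SpecialLinearGroup (Fin n) R) :
    M ∈ cayleyBall {A, B} ((456 * m + 159) * n ^ 2) := by
  have hM := cayleyBall.subset_mul (h.rowTransvections_subset hn hm)
    (hR.mem_cayleyBall_rowTransvections M)
  rw [Fintype.card_fin] at hM
  exact cayleyBall.mono (by linarith) hM

end IsStandardPair

end StandardPair

end StandardGenerators

lemma exists_natCast_eq_zmod_of_lt_lucas {k : ℕ} [NeZero k] (r : ZMod k) :
    ∃ N : ℕ, N < lucas (2 * (Nat.log 2 k + 1)) ∧ (N : ZMod k) = r :=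
  ⟨r.val, r.val_lt.trans ((Nat.lt_pow_succ_log_self one_lt_two k).trans_le (two_pow_le_lucas _)),
    ZMod.natCast_zmod_val r⟩

lemma natLog_two_mul_add_le_mul_log {k : ℕ} (hk : 2 ≤ k) :
    (456 * Nat.log 2 k + 159 : ℝ) ≤ 3600 * Real.log k := by
  have hlog : (Nat.log 2 k : ℝ) * Real.log 2 ≤ Real.log k := by
    rw [← le_div_iff₀ (Real.log_pos one_lt_two)]
    exact Real.natLog_le_logb k 2
  have hone : (1 : ℝ) ≤ Nat.log 2 k := by exact_mod_cast Nat.log_pos one_lt_two hk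
  nlinarith [Real.log_two_gt_d9]

/-- For all integers k ≥ 2 and n ≥ 3, every element of SL_n(ℤ/kℤ) is a product of at
most 3600·n²·ln k elements of {Ā, Ā⁻¹, B̄, B̄⁻¹}. -/
theorem diameter_SL_n_ZMod_le (n k : ℕ) (hn : 3 ≤ n) (hk : 2 ≤ k)
    (A B : Matrix.SpecialLinearGroup (Fin n) (ZMod k))
    (hA : (A : Matrix (Fin n) (Fin n) (ZMod k)) = Amat n (ZMod k))
    (hB : (B : Matrix (Fin n) (Fin n) (ZMod k)) = Bmat n (ZMod k))
    (M : Matrix.SpecialLinearGroup (Fin n) (ZMod k)) :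
    ∃ l : List (Matrix.SpecialLinearGroup (Fin n) (ZMod k)),
      (l.length : ℝ) ≤ 3600 * n ^ 2 * Real.log k ∧
      (∀ x ∈ l, x = A ∨ x = A⁻¹ ∨ x = B ∨ x = B⁻¹) ∧
      l.prod = M := by
  have : NeZero k := ⟨by omega⟩
  have hAB : IsStandardPair A B := ⟨hA, hB⟩
  have hR : HasStableRankOne (ZMod k) := hasStableRankOne_of_finite_maximalSpectrum _
  obtain ⟨l, hlen, hl, hprod⟩ := cayleyBall.exists_list
    (hAB.mem_cayleyBall hn hR exists_natCast_eq_zmod_of_lt_lucas M)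
  refine ⟨l, ?_, fun x hx ↦ ?_, hprod⟩
  · calc (l.length : ℝ) ≤ (456 * Nat.log 2 k + 159) * n ^ 2 := by exact_mod_cast hlen
      _ ≤ 3600 * Real.log k * n ^ 2 := by
        gcongr
        exact natLog_two_mul_add_le_mul_log hk
      _ = 3600 * n ^ 2 * Real.log k := by ring
  · have := hl x hx
    simp only [Set.mem_insert_iff, Set.mem_singleton_iff, inv_eq_iff_eq_inv] at this
    tauto
end

section
/- There exists a constant K > 0 such that for every integer n ≥ 3 and every prime p, there is a generating set Σ of SL_n(𝔽_p) with at most 3 elements such that every element of SL_n(𝔽_p) is a product of at most K·n²·ln p elements of Σ ∪ Σ⁻¹. -/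
/-!
Conjugation by a product of two Weyl elements scales a transvection by a square, turning `T(x)`
into `T(b x) = T(x) ^ b`; Horner's rule in base `b` then makes every transvection in one fixed
position a word of length `O(log p)`. A monomial matrix over an `(n - 1)`-cycle fixing `0` moves
the off-diagonal entries of row `0` along its orbit, so Horner's rule again builds a whole row, all
`n - 1` entries of it, at the amortized cost `O(log p)` per entry. Conjugating by an `n`-cycle
reaches the other rows, and Gaussian elimination with `3 n` such row matrices yields the factor
`n ^ 2`.
-/

-- `transvection` without a qualifier is the element of `SL`, not its underlying matrix.
open Matrix hiding transvection SpecialLinearGroup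
open Matrix.SpecialLinearGroup Pointwise

local notation "SL" => Matrix.SpecialLinearGroup

section WordBall

variable {G : Type*} [Group G] {S : Set G} {g h : G} {k l : ℕ}

/-- The ball of radius `k` about `1` in the Cayley graph of `G` with respect to `S`: the products
of at most `k` elements of `S ∪ S⁻¹`. Padding words with the letter `1` turns it into a power. -/
def wordBall (S : Set G) (k : ℕ) : Set G :=
  insert 1 (S ∪ S⁻¹) ^ k

theorem one_mem_wordBall : 1 ∈ wordBall S k :=
  Set.one_mem_pow (Set.mem_insert _ _)

theorem wordBall_mono (hkl : k ≤ l) : wordBall S k ⊆ wordBall S l :=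
  Set.pow_subset_pow_right (Set.mem_insert _ _) hkl

theorem mem_wordBall_one_of_mem (hg : g ∈ S) : g ∈ wordBall S 1 := by
  simp [wordBall, hg]

theorem mul_mem_wordBall (hg : g ∈ wordBall S k) (hh : h ∈ wordBall S l) :
    g * h ∈ wordBall S (k + l) := by
  rw [wordBall, pow_add]
  exact Set.mul_mem_mul hg hh

theorem pow_mem_wordBall (hg : g ∈ wordBall S k) (n : ℕ) : g ^ n ∈ wordBall S (k * n) := by
  rw [wordBall, pow_mul]
  exact Set.pow_mem_pow hg

theorem wordBall_pow (S : Set G) (k n : ℕ) : wordBall S k ^ n = wordBall S (k * n) :=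
  (pow_mul _ k n).symm

theorem inv_mem_wordBall (hg : g ∈ wordBall S k) : g⁻¹ ∈ wordBall S k := by
  have hinv : (insert 1 (S ∪ S⁻¹))⁻¹ = insert 1 (S ∪ S⁻¹) := by
    simp [Set.inv_insert, Set.union_comm]
  rwa [wordBall, ← hinv, inv_pow, Set.inv_mem_inv]

theorem conj_mem_wordBall (hg : g ∈ wordBall S k) (hh : h ∈ wordBall S l) :
    g * h * g⁻¹ ∈ wordBall S (l + 2 * k) := by
  convert mul_mem_wordBall (mul_mem_wordBall hg hh) (inv_mem_wordBall hg) using 1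
  ring_nf

theorem exists_list_of_mem_wordBall (hg : g ∈ wordBall S k) :
    ∃ w : List G, w.length ≤ k ∧ (∀ x ∈ w, x ∈ S ∨ x⁻¹ ∈ S) ∧ w.prod = g := by
  induction k generalizing g with
  | zero => exact ⟨[], by simpa [wordBall, eq_comm] using hg⟩
  | succ k ih =>
    rw [wordBall, pow_succ'] at hg
    obtain ⟨x, hx, y, hy, rfl⟩ := hg
    obtain ⟨w, hlen, hw, rfl⟩ := ih hy
    rcases hx with rfl | hx
    · exact ⟨w, by lia, hw, by simp⟩
    · exact ⟨x :: w, by simpa, by simpa using ⟨hx, hw⟩, by simp⟩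

theorem closure_eq_top_of_wordBall_eq_univ (hS : wordBall S k = Set.univ) :
    Subgroup.closure S = ⊤ := by
  refine (Subgroup.eq_top_iff' _).2 fun g => ?_
  have hg : g ∈ wordBall S k := hS ▸ Set.mem_univ g
  obtain ⟨w, -, hw, rfl⟩ := exists_list_of_mem_wordBall hg
  refine Subgroup.list_prod_mem _ fun x hx => ?_
  rcases hw x hx with h | h
  · exact Subgroup.subset_closure h
  · exact inv_mem_iff.1 (Subgroup.subset_closure h)

theorem pow_mem_wordBall_of_conj_eq_pow {t d : G} {b e : ℕ} (ht : t ∈ S) (hd : d ∈ wordBall S e)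
    (hconj : d * t * d⁻¹ = t ^ b) {q : ℕ} (hq : q < b ^ k) :
    t ^ q ∈ wordBall S (k * (2 * e + b)) := by
  induction k generalizing q with
  | zero =>
    obtain rfl : q = 0 := by simpa using hq
    exact pow_zero t ▸ one_mem_wordBall
  | succ k ih =>
    have hdiv : q / b < b ^ k := Nat.div_lt_of_lt_mul (by rwa [← pow_succ'])
    have hmod : q % b < b := Nat.mod_lt _ (Nat.pos_of_ne_zero (by rintro rfl; simp at hq))
    have hsplit : t ^ q = d * t ^ (q / b) * d⁻¹ * t ^ (q % b) := by
      rw [← conj_pow, hconj, ← pow_mul, ← pow_add, Nat.div_add_mod]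
    rw [hsplit]
    refine wordBall_mono ?_ (mul_mem_wordBall (conj_mem_wordBall hd (ih hdiv))
      (pow_mem_wordBall (mem_wordBall_one_of_mem ht) _))
    lia

end WordBall

section Monomial

variable {ι R : Type*} [DecidableEq ι] [Fintype ι] [CommRing R] {σ τ : Equiv.Perm ι}
  {A B : SL ι R}

/-- `A` is a monomial matrix over the permutation `τ`: it sends the `k`-th basis vector to a unit
multiple of the `τ k`-th one. -/
def IsMonomial (τ : Equiv.Perm ι) (A : SL ι R) : Prop :=
  ∃ c : ι → Rˣ, ∀ l k, A l k = (Pi.single (τ k) (c k : R) : ι → R) l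

namespace IsMonomial

theorem one : IsMonomial 1 (1 : SL ι R) :=
  ⟨1, fun l k => by simp [one_apply, Pi.single_apply]⟩

theorem mul (hA : IsMonomial σ A) (hB : IsMonomial τ B) : IsMonomial (σ * τ) (A * B) := by
  obtain ⟨c, hc⟩ := hA
  obtain ⟨d, hd⟩ := hB
  refine ⟨fun k => c (τ k) * d k, fun l k => ?_⟩
  rw [coe_mul, mul_apply, Finset.sum_eq_single (τ k)]
  · simp [hc, hd, Pi.single_apply]
  · intro m _ hm
    rw [hd, Pi.single_eq_of_ne hm, mul_zero]
  · simp

theorem pow (hA : IsMonomial σ A) (n : ℕ) : IsMonomial (σ ^ n) (A ^ n) := by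
  induction n with
  | zero => exact one
  | succ n ih => exact pow_succ σ n ▸ pow_succ A n ▸ ih.mul hA

end IsMonomial

end Monomial

section Weyl

variable {ι R : Type*} [DecidableEq ι] [Fintype ι] [CommRing R] {i j : ι}

/-- The Weyl element `e_i ↦ -a⁻¹ e_j`, `e_j ↦ a e_i` of the copy of `SL₂` at `i, j`. -/
def weylElement (hij : i ≠ j) (a : Rˣ) : SL ι R :=
  transvection hij (a : R) *
    transvection hij.symm (-(a⁻¹ : Rˣ) : R) *
    transvection hij (a : R)

theorem coe_weylElement (hij : i ≠ j) (a : Rˣ) :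
    (weylElement hij a : Matrix ι ι R) =
      1 + single i j (a : R) - single j i ((a⁻¹ : Rˣ) : R) - single i i 1 - single j j 1 := by
  simp only [weylElement, coe_mul, transvection_coe,
    mul_add, add_mul, single_mul_single_same, one_mul, mul_one,
    single_mul_single_of_ne _ _ _ _ hij.symm]
  simp only [← single_neg, mul_neg, Units.mul_inv, add_zero, neg_mul, Units.inv_mul, one_mul,
    add_neg_cancel_comm_assoc]
  abel

theorem isMonomial_weylElement (hij : i ≠ j) (a : Rˣ) :
    IsMonomial (Equiv.swap i j) (weylElement hij a) := by
  refine ⟨fun k => if k = i then -a⁻¹ else if k = j then a else 1, fun l k => ?_⟩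
  rw [coe_weylElement]
  simp only [Matrix.sub_apply, Matrix.add_apply, single_apply, one_apply, Pi.single_apply]
  obtain rfl | hki := eq_or_ne k i
  · rw [Equiv.swap_apply_left, if_pos rfl, Units.val_neg]
    grind
  obtain rfl | hkj := eq_or_ne k j
  · rw [Equiv.swap_apply_right, if_neg hij.symm, if_pos rfl]
    grind
  · rw [Equiv.swap_apply_of_ne_of_ne hki hkj, if_neg hki, if_neg hkj, Units.val_one]
    grind

theorem exists_isMonomial (R : Type*) [CommRing R] (τ : Equiv.Perm ι) :
    ∃ A : SL ι R, IsMonomial τ A :=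
  Equiv.Perm.swap_induction_on τ ⟨1, .one⟩ fun _ _ _ hxy ⟨A, hA⟩ =>
    ⟨weylElement hxy 1 * A, (isMonomial_weylElement hxy 1).mul hA⟩

theorem weylElement_conj_transvection (hij : i ≠ j) (a : Rˣ) (x : R) :
    weylElement hij a * transvection hij (a ^ 2 * x) * (weylElement hij a)⁻¹ =
      transvection hij.symm (-x) := by
  rw [mul_inv_eq_iff_eq_mul]
  refine Subtype.ext ?_
  simp only [coe_mul, transvection_coe, coe_weylElement,
    mul_add, add_mul, sub_mul, mul_sub, single_mul_single_same, one_mul, mul_one,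
    single_mul_single_of_ne _ _ _ _ hij, single_mul_single_of_ne _ _ _ _ hij.symm]
  have hcancel : ((a⁻¹ : Rˣ) : R) * (a ^ 2 * x) = x * a := by
    rw [pow_two, mul_assoc, Units.inv_mul_cancel_left, mul_comm]
  simp only [hcancel, ← single_neg, neg_mul, add_zero, sub_zero]
  abel

theorem weylElement_inv_mul_weylElement_one_conj_transvection (hij : i ≠ j) (a : Rˣ) (x : R) :
    ((weylElement hij a)⁻¹ * weylElement hij 1) * transvection hij x *
        ((weylElement hij a)⁻¹ * weylElement hij 1)⁻¹ =
      transvection hij (a ^ 2 * x) := by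
  have h1 := weylElement_conj_transvection hij 1 x
  have ha := weylElement_conj_transvection hij a x
  rw [Units.val_one, one_pow, one_mul] at h1
  rw [mul_inv_eq_iff_eq_mul] at h1 ha ⊢
  rw [mul_assoc, h1, inv_mul_eq_iff_eq_mul, ← mul_assoc, ← mul_assoc, ha, mul_inv_cancel_right]

theorem transvection_pow (hij : i ≠ j) (x : R) (n : ℕ) :
    transvection hij x ^ n = transvection hij (n * x) := by
  induction n with
  | zero => simp
  | succ n ih =>
    rw [pow_succ, ih, ← transvection_add, Nat.cast_succ, add_one_mul]

variable {S : Set (SL ι R)} {a : Rˣ} {b : ℕ}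

theorem weylElement_one_mem_wordBall (hij : i ≠ j) (hab : (a : R) ^ 2 = b)
    (hT : transvection hij (1 : R) ∈ S) (hw : weylElement hij a ∈ S) :
    weylElement hij (1 : Rˣ) ∈ wordBall S (b + 4) := by
  have hT' := mem_wordBall_one_of_mem hT
  have hneg : transvection hij.symm (-1 : R) ∈ wordBall S (1 * b + 2 * 1) := by
    rw [← weylElement_conj_transvection hij a, hab, ← transvection_pow]
    exact conj_mem_wordBall (mem_wordBall_one_of_mem hw) (pow_mem_wordBall hT' b)
  convert mul_mem_wordBall (mul_mem_wordBall hT' hneg) hT' using 1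
  · congr 1; ring
  · simp [weylElement]

theorem transvection_natCast_mem_wordBall (hij : i ≠ j) (hab : (a : R) ^ 2 = b)
    (hT : transvection hij (1 : R) ∈ S) (hw : weylElement hij a ∈ S)
    {k q : ℕ} (hq : q < b ^ k) :
    transvection hij (q : R) ∈ wordBall S (k * (3 * b + 10)) := by
  have hd : (weylElement hij a)⁻¹ * weylElement hij 1 ∈ wordBall S (1 + (b + 4)) :=
    mul_mem_wordBall (inv_mem_wordBall (mem_wordBall_one_of_mem hw))
      (weylElement_one_mem_wordBall hij hab hT hw)
  have hmem := pow_mem_wordBall_of_conj_eq_pow hT hd (b := b) (by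
    rw [weylElement_inv_mul_weylElement_one_conj_transvection, hab, transvection_pow]) hq
  rw [transvection_pow, mul_one] at hmem
  convert hmem using 2
  ring

end Weyl

-- A number base is at least `2`, so for `p = 2` the square `1` is represented by `3`.
theorem exists_unit_sq_eq_natCast (p : ℕ) [Fact p.Prime] :
    ∃ a : (ZMod p)ˣ, ∃ b : ℕ, 2 ≤ b ∧ b ≤ 4 ∧ (a : ZMod p) ^ 2 = b := by
  obtain rfl | hp := (Fact.out : p.Prime).eq_two_or_odd'
  · exact ⟨1, 3, by norm_num, by norm_num, rfl⟩
  · exact ⟨ZMod.unitOfCoprime 2 hp.coprime_two_left, 4, by norm_num [ZMod.coe_unitOfCoprime]⟩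

theorem exists_unit_transvection_mem_wordBall {ι : Type*} [DecidableEq ι] [Fintype ι] {i j : ι}
    (hij : i ≠ j) (p : ℕ) [Fact p.Prime] :
    ∃ a : (ZMod p)ˣ, ∀ S : Set (SL ι (ZMod p)),
      transvection hij 1 ∈ S → weylElement hij a ∈ S →
      ∀ x, transvection hij x ∈ wordBall S (22 * (Nat.log 2 p + 1)) := by
  obtain ⟨a, b, hb2, hb4, hab⟩ := exists_unit_sq_eq_natCast p
  refine ⟨a, fun S hT hw x => ?_⟩
  have hx : x.val < b ^ (Nat.log 2 p + 1) := calc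
    x.val < p := x.val_lt
    _ < 2 ^ (Nat.log 2 p + 1) := Nat.lt_pow_succ_log_self one_lt_two p
    _ ≤ b ^ (Nat.log 2 p + 1) := by gcongr
  rw [← ZMod.natCast_zmod_val x]
  refine wordBall_mono ?_ (transvection_natCast_mem_wordBall hij hab hT hw hx)
  rw [mul_comm]
  gcongr
  lia

section RowTransvection

variable {ι R : Type*} [DecidableEq ι] [Fintype ι] [CommRing R] {i j : ι}

/-- The matrix `1 + e_i rᵀ` adding multiples of the `i`-th column to the other columns. The `i`-th
entry of `r` is ignored, which makes the determinant `1` for every `r`. -/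
def rowTransvection (i : ι) (r : ι → R) : SL ι R :=
  ⟨1 + vecMulVec (Pi.single i 1) (Function.update r i 0), by
    simp [vecMulVec_eq Unit, det_one_add_replicateCol_mul_replicateRow]⟩

theorem coe_rowTransvection (i : ι) (r : ι → R) :
    (rowTransvection i r : Matrix ι ι R) =
      1 + vecMulVec (Pi.single i 1) (Function.update r i 0) :=
  rfl

theorem rowTransvection_update_self (i : ι) (r : ι → R) (x : R) :
    rowTransvection i (Function.update r i x) = rowTransvection i r := by
  refine Subtype.ext ?_
  simp only [coe_rowTransvection, Function.update_idem]

theorem rowTransvection_add (i : ι) (r s : ι → R) :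
    rowTransvection i (r + s) = rowTransvection i r * rowTransvection i s := by
  refine Subtype.ext ?_
  have hupdate : Function.update (r + s) i 0 = Function.update r i 0 + Function.update s i 0 := by
    rw [← Function.update_add, add_zero]
  simp only [coe_mul, coe_rowTransvection, hupdate, vecMulVec_add, mul_add, add_mul, mul_one,
    one_mul, vecMulVec_mul_vecMulVec, dotProduct_single, Function.update_self, zero_smul,
    vecMulVec_zero]
  abel

@[simp]
theorem rowTransvection_zero (i : ι) : rowTransvection i (0 : ι → R) = 1 := by
  simpa using rowTransvection_add i (0 : ι → R) 0

theorem rowTransvection_single (hij : i ≠ j) (x : R) :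
    rowTransvection i (Pi.single j x) = transvection hij x := by
  have hupdate : Function.update (Pi.single j x : ι → R) i 0 = Pi.single j x := by simp [hij]
  refine Subtype.ext ?_
  rw [coe_rowTransvection, transvection_coe, hupdate]
  congr 1
  ext a b
  simp only [vecMulVec_apply, single_apply, Pi.single_apply]
  grind

theorem rowTransvection_eq_transvection_mul (hij : i ≠ j) (r : ι → R) :
    rowTransvection i r = transvection hij (r j) * rowTransvection i (Function.update r j 0) := by
  have hr : Pi.single j (r j) + Function.update r j 0 = r := by
    ext k
    obtain rfl | hk := eq_or_ne k j <;> simp [*]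
  rw [← rowTransvection_single, ← rowTransvection_add, hr]

theorem mul_rowTransvection_apply (g : SL ι R) (i : ι) (r : ι → R) (a b : ι) :
    (g * rowTransvection i r) a b = g a b + g a i * Function.update r i 0 b := by
  rw [coe_mul, coe_rowTransvection, mul_add, mul_one, mul_vecMulVec, mulVec_single_one]
  rfl

theorem IsMonomial.exists_conj_rowTransvection {τ : Equiv.Perm ι} {A : SL ι R}
    (hA : IsMonomial τ A) (i : ι) (r : ι → R) :
    ∃ d : ι → Rˣ, A * rowTransvection i (fun k => d k * r (τ k)) * A⁻¹ =
      rowTransvection (τ i) r := by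
  obtain ⟨c, hc⟩ := hA
  refine ⟨fun k => (c i)⁻¹ * c k, ?_⟩
  have hrow (v : ι → R) (b : ι) : (v ᵥ* (A : Matrix ι ι R)) b = v (τ b) * c b := by
    simp [vecMul, dotProduct, hc, Pi.single_apply]
  rw [mul_inv_eq_iff_eq_mul]
  ext a b
  rw [mul_rowTransvection_apply, coe_mul, coe_rowTransvection, add_mul, one_mul, vecMulVec_mul,
    Matrix.add_apply, vecMulVec_apply, hrow, hc a i]
  obtain rfl | ha := eq_or_ne a (τ i)
  · obtain rfl | hb := eq_or_ne b i
    · simp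
    · have hci : (c i : R) * ((c i)⁻¹ : Rˣ) = 1 := (c i).mul_inv
      simp only [Pi.single_eq_same, Function.update_of_ne hb,
        Function.update_of_ne (τ.injective.ne hb), Units.val_mul]
      linear_combination (c b * r (τ b)) * hci
  · simp [ha]

end RowTransvection

section Elimination

variable {ι R : Type*} [DecidableEq ι] [Fintype ι] [CommRing R] {s : Finset ι} {g : SL ι R}
  {i j : ι}

theorem det_updateRow_one (j : ι) (v : ι → R) : (updateRow 1 j v).det = v j := by
  rw [← cramer_transpose_apply, transpose_one, cramer_one, Module.End.one_apply]

theorem apply_self_eq_one_of_rows_eq_single (hg : ∀ i ≠ j, g i = Pi.single i 1) : g j j = 1 := by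
  have hg_eq : (g : Matrix ι ι R) = updateRow 1 j (g j) := by
    ext a b
    obtain rfl | ha := eq_or_ne a j
    · rw [updateRow_self]
    · rw [updateRow_ne ha, hg a ha, one_eq_pi_single]
  rw [← det_updateRow_one j (g j), ← hg_eq, g.det_coe]

theorem exists_apply_ne_zero_of_rows_eq_single [Nontrivial R] (hj : j ∈ s)
    (hg : ∀ i ∉ s, g i = Pi.single i 1) : ∃ k ∈ s, g j k ≠ 0 := by
  have hinv (k : ι) (hk : k ∉ s) : (g⁻¹) k j = 0 := by
    have h : (g * g⁻¹) k j = (1 : SL ι R) k j := by rw [mul_inv_cancel]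
    rw [coe_mul, mul_apply_eq_vecMul, hg k hk, single_one_vecMul, coe_one,
      one_apply_ne (ne_of_mem_of_not_mem hj hk).symm] at h
    exact h
  by_contra! hzero
  have h : (g * g⁻¹) j j = (1 : SL ι R) j j := by rw [mul_inv_cancel]
  rw [coe_mul, mul_apply, coe_one, one_apply_eq, Finset.sum_eq_zero] at h
  · exact zero_ne_one h
  · intro k _
    by_cases hk : k ∈ s
    · rw [hzero k hk, zero_mul]
    · rw [hinv k hk, mul_zero]

theorem mul_rowTransvection_rows_eq_single (hi : i ∈ s) (hg : ∀ a ∉ s, g a = Pi.single a 1)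
    (r : ι → R) : ∀ a ∉ s, (g * rowTransvection i r) a = Pi.single a 1 := by
  intro a ha
  ext b
  have hia : i ≠ a := ne_of_mem_of_not_mem hi ha
  rw [mul_rowTransvection_apply, hg a ha, Pi.single_eq_of_ne hia, zero_mul, add_zero]

variable {T : Set (SL ι R)} {m : ℕ}

theorem mem_pow_succ_of_mul_rowTransvection_mem (hT : ∀ i r, rowTransvection i r ∈ T)
    (r : ι → R) (hg : g * rowTransvection i r ∈ T ^ m) : g ∈ T ^ (m + 1) := by
  refine ⟨_, hg, _, hT i (-r), ?_⟩
  simp [mul_assoc, ← rowTransvection_add]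

theorem mem_pow_add_one_of_apply_self_eq_one (hT : ∀ i r, rowTransvection i r ∈ T)
    (hs : ∀ h : SL ι R, (∀ i ∉ s, h i = Pi.single i 1) → h ∈ T ^ m)
    (hg : ∀ i ∉ insert j s, g i = Pi.single i 1) (hjj : g j j = 1) : g ∈ T ^ (m + 1) := by
  refine mem_pow_succ_of_mul_rowTransvection_mem hT (i := j) (-g j) (hs _ fun a ha => ?_)
  obtain rfl | haj := eq_or_ne a j
  · ext b
    rw [mul_rowTransvection_apply, hjj]
    obtain rfl | hb := eq_or_ne b a <;> simp [*]
  · exact mul_rowTransvection_rows_eq_single (Finset.mem_insert_self j s) hg _ a (by simp [haj, ha])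

end Elimination

section Field

variable {ι K : Type*} [DecidableEq ι] [Fintype ι] [Field K] {s : Finset ι} {g : SL ι K}
  {j k : ι} {T : Set (SL ι K)} {m : ℕ}

theorem mem_pow_add_two_of_apply_ne_zero (hT : ∀ i r, rowTransvection i r ∈ T)
    (hs : ∀ h : SL ι K, (∀ i ∉ s, h i = Pi.single i 1) → h ∈ T ^ m) (hj : j ∉ s) (hk : k ∈ s)
    (hg : ∀ i ∉ insert j s, g i = Pi.single i 1) (hjk : g j k ≠ 0) : g ∈ T ^ (m + 2) := by
  refine mem_pow_succ_of_mul_rowTransvection_mem (i := k) hT (Pi.single j ((1 - g j j) / g j k))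
    (mem_pow_add_one_of_apply_self_eq_one hT hs
      (mul_rowTransvection_rows_eq_single (Finset.mem_insert_of_mem hk) hg _) ?_)
  rw [mul_rowTransvection_apply, Function.update_of_ne (ne_of_mem_of_not_mem hk hj).symm,
    Pi.single_eq_same, mul_div_cancel₀ _ hjk, add_sub_cancel]

theorem mem_pow_add_three_of_rows_eq_single (hT : ∀ i r, rowTransvection i r ∈ T)
    (hs : ∀ h : SL ι K, (∀ i ∉ s, h i = Pi.single i 1) → h ∈ T ^ m) (hj : j ∉ s)
    (hg : ∀ i ∉ insert j s, g i = Pi.single i 1) : g ∈ T ^ (m + 3) := by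
  have hone : (1 : SL ι K) ∈ T := by simpa using hT j 0
  have hjs := Finset.mem_insert_self j s
  by_cases hpivot : ∃ k ∈ s, g j k ≠ 0
  · obtain ⟨k, hk, hjk⟩ := hpivot
    exact Set.pow_subset_pow_right hone (by lia)
      (mem_pow_add_two_of_apply_ne_zero hT hs hj hk hg hjk)
  obtain rfl | ⟨k, hk⟩ := s.eq_empty_or_nonempty
  · exact Set.pow_subset_pow_right hone (by lia) <| mem_pow_add_one_of_apply_self_eq_one hT hs hg
      (apply_self_eq_one_of_rows_eq_single (by simpa using hg))
  have hjj : g j j ≠ 0 := by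
    simpa only [Finset.exists_mem_insert, hpivot, or_false] using
      exists_apply_ne_zero_of_rows_eq_single hjs hg
  push Not at hpivot
  -- Row `j` vanishes on `s`: adding column `j` to column `k` creates a pivot at `(j, k)`.
  refine mem_pow_succ_of_mul_rowTransvection_mem (i := j) hT (Pi.single k 1)
    (mem_pow_add_two_of_apply_ne_zero hT hs hj hk (mul_rowTransvection_rows_eq_single hjs hg _) ?_)
  rwa [mul_rowTransvection_apply, hpivot k hk, Function.update_of_ne (ne_of_mem_of_not_mem hk hj),
    Pi.single_eq_same, zero_add, mul_one]

theorem mem_pow_of_rows_eq_single (hT : ∀ i r, rowTransvection i r ∈ T)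
    (hg : ∀ i ∉ s, g i = Pi.single i 1) : g ∈ T ^ (3 * s.card) := by
  induction s using Finset.induction generalizing g with
  | empty =>
    obtain rfl : g = 1 := by
      ext i j
      rw [hg i (Finset.notMem_empty i), coe_one, one_eq_pi_single]
    simp
  | insert j s hj ih =>
    rw [Finset.card_insert_of_notMem hj, mul_add_one]
    exact mem_pow_add_three_of_rows_eq_single hT (fun h hh => ih hh) hj hg

theorem pow_eq_univ_of_rowTransvection_mem (hT : ∀ i r, rowTransvection i r ∈ T) :
    T ^ (3 * Fintype.card ι) = Set.univ :=
  Set.eq_univ_of_forall fun g => mem_pow_of_rows_eq_single hT (s := Finset.univ) (by simp)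

end Field

section RowWordBall

variable {ι R : Type*} [DecidableEq ι] [Fintype ι] [CommRing R] {S : Set (SL ι R)}
  {A : SL ι R} {σ : Equiv.Perm ι} {i j : ι} {c e k : ℕ}

theorem rowTransvection_mem_wordBall_of_isMonomial (hA : IsMonomial σ A) (hAS : A ∈ wordBall S e)
    {t : Set ι} (ht : ∀ r, Function.support r ⊆ t → rowTransvection i r ∈ wordBall S k)
    {r : ι → R} (hr : Function.support r ⊆ σ '' t) :
    rowTransvection (σ i) r ∈ wordBall S (k + 2 * e) := by
  obtain ⟨d, hd⟩ := hA.exists_conj_rowTransvection i r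
  rw [← hd]
  refine conj_mem_wordBall hAS (ht _ fun b hb => ?_)
  exact (σ.injective.mem_set_image).1 (hr fun h => hb (mul_eq_zero_of_right _ h))

-- Horner's rule: once the entry at `j` is split off, the remaining row is supported on the image
-- under `σ` of a shorter orbit segment, and a single conjugation by `A` accounts for all of it.
theorem rowTransvection_mem_wordBall_of_support_subset_orbit (hij : i ≠ j) (hσ : σ i = i)
    (hA : IsMonomial σ A) (hAS : A ∈ wordBall S e)
    (hT : ∀ x, transvection hij x ∈ wordBall S c) (d : ℕ) {r : ι → R}
    (hr : Function.support r ⊆ (fun m => (σ ^ m) j) '' Set.Iio d) :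
    rowTransvection i r ∈ wordBall S (d * (c + 2 * e)) := by
  induction d generalizing r with
  | zero =>
    obtain rfl : r = 0 := by simpa using hr
    exact rowTransvection_zero (R := R) i ▸ one_mem_wordBall
  | succ d ih =>
    have htail : Function.support (Function.update r j 0) ⊆
        σ '' ((fun m => (σ ^ m) j) '' Set.Iio d) := by
      intro b hb
      have hbj : b ≠ j := by rintro rfl; simp at hb
      obtain ⟨m, hm, rfl⟩ := hr (show r b ≠ 0 by simpa [hbj] using hb)
      obtain _ | m := m
      · exact absurd rfl hbj
      · exact ⟨_, ⟨m, Nat.lt_of_succ_lt_succ hm, rfl⟩, by simp [pow_succ']⟩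
    have hmem := mul_mem_wordBall (hT (r j))
      (rowTransvection_mem_wordBall_of_isMonomial hA hAS (fun _ => ih) htail)
    rw [hσ, ← rowTransvection_eq_transvection_mul] at hmem
    convert hmem using 2
    ring

end RowWordBall

section FinRotate

variable {m : ℕ}

theorem val_finRotate_pow_zero (k : Fin (m + 1)) : (finRotate (m + 1) ^ (k : ℕ)) 0 = k := by
  induction k using Fin.induction with
  | zero => simp
  | succ k ih =>
    rw [Fin.val_castSucc] at ih
    rw [Fin.val_succ, pow_succ', Equiv.Perm.mul_apply, ih, finRotate_apply,
      Fin.coeSucc_eq_succ]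

theorem swap_mul_finRotate_apply_zero :
    (Equiv.swap (0 : Fin (m + 2)) 1 * finRotate (m + 2)) 0 = 0 := by
  simp

theorem swap_mul_finRotate_pow_apply_one (k : Fin (m + 1)) :
    ((Equiv.swap (0 : Fin (m + 2)) 1 * finRotate (m + 2)) ^ (k : ℕ)) 1 = k.succ := by
  induction k using Fin.induction with
  | zero => simp
  | succ k ih =>
    rw [Fin.val_castSucc] at ih
    rw [Fin.val_succ, pow_succ', Equiv.Perm.mul_apply, ih, Equiv.Perm.mul_apply,
      finRotate_apply, Fin.succ_castSucc, Fin.coeSucc_eq_succ]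
    exact Equiv.swap_apply_of_ne_of_ne (Fin.succ_ne_zero _) (Fin.succ_succ_ne_one _)

variable {R : Type*} [CommRing R] {S : Set (SL (Fin (m + 2)) R)} {a : Rˣ}
  {s : SL (Fin (m + 2)) R} {c : ℕ}

theorem rowTransvection_mem_wordBall_of_isMonomial_finRotate
    (h01 : (0 : Fin (m + 2)) ≠ 1) (hw : weylElement h01 a ∈ S)
    (hs : IsMonomial (finRotate (m + 2)) s) (hsS : s ∈ S)
    (hT : ∀ x : R, transvection h01 x ∈ wordBall S c) (i : Fin (m + 2)) (r : Fin (m + 2) → R) :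
    rowTransvection i r ∈ wordBall S ((m + 1) * (c + 4) + 2 * i) := by
  have hzero (r : Fin (m + 2) → R) : rowTransvection 0 r ∈ wordBall S ((m + 1) * (c + 2 * 2)) := by
    rw [← rowTransvection_update_self _ _ 0]
    refine rowTransvection_mem_wordBall_of_support_subset_orbit h01 swap_mul_finRotate_apply_zero
      ((isMonomial_weylElement h01 a).mul hs)
      (mul_mem_wordBall (mem_wordBall_one_of_mem hw) (mem_wordBall_one_of_mem hsS)) hT _
      fun b hb => ?_
    obtain ⟨k, rfl⟩ := Fin.exists_succ_eq.2 (show b ≠ 0 by rintro rfl; simp at hb)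
    exact ⟨k, k.2, swap_mul_finRotate_pow_apply_one k⟩
  have hmem := rowTransvection_mem_wordBall_of_isMonomial (hs.pow i)
    (pow_mem_wordBall (mem_wordBall_one_of_mem hsS) i) (t := Set.univ) (fun r _ => hzero r)
    (r := r) (by simp)
  rwa [val_finRotate_pow_zero, one_mul] at hmem

end FinRotate

theorem exists_wordBall_eq_univ (n p : ℕ) [Fact p.Prime] :
    ∃ S : Finset (SL (Fin n) (ZMod p)), S.card ≤ 3 ∧
      wordBall (S : Set (SL (Fin n) (ZMod p))) (84 * n ^ 2 * (Nat.log 2 p + 1)) = Set.univ := by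
  obtain hn | ⟨m, rfl⟩ : n ≤ 1 ∨ ∃ m, n = m + 2 := by
    rcases n with _ | _ | m <;> simp
  · have := Fin.subsingleton_iff_le_one.2 hn
    exact ⟨∅, by simp, Set.eq_univ_of_forall fun g => Subsingleton.elim 1 g ▸ one_mem_wordBall⟩
  have h01 : (0 : Fin (m + 2)) ≠ 1 := zero_ne_one
  obtain ⟨a, ha⟩ := exists_unit_transvection_mem_wordBall h01 p
  obtain ⟨s, hs⟩ := exists_isMonomial (ZMod p) (finRotate (m + 2))
  classical
  set S : Finset (SL (Fin (m + 2)) (ZMod p)) := {transvection h01 1, weylElement h01 a, s} with hS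
  have hrow (i : Fin (m + 2)) (r : Fin (m + 2) → ZMod p) :
      rowTransvection i r ∈ wordBall S (28 * (m + 2) * (Nat.log 2 p + 1)) := by
    refine wordBall_mono ?_ (rowTransvection_mem_wordBall_of_isMonomial_finRotate h01
      (a := a) (by simp [hS]) hs (by simp [hS]) (ha S (by simp [hS]) (by simp [hS])) i r)
    have := i.2
    nlinarith
  refine ⟨S, Finset.card_le_three, ?_⟩
  rw [← pow_eq_univ_of_rowTransvection_mem hrow, wordBall_pow, Fintype.card_fin]
  congr 1
  ring

theorem natLog_two_add_one_le {p : ℕ} (hp : 2 ≤ p) : (Nat.log 2 p + 1 : ℝ) ≤ 3 * Real.log p := by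
  have hlogb := Real.natLog_le_logb p 2
  have htwo := Real.log_two_gt_d9
  have hmono : Real.log 2 ≤ Real.log p := Real.log_le_log (by norm_num) (mod_cast hp)
  rw [Real.logb, Nat.cast_ofNat, le_div_iff₀ (by linarith)] at hlogb
  nlinarith

theorem exists_three_element_generating_set_SL_n_Fp_general :
    ∃ K : ℝ, 0 < K ∧ ∀ (n p : ℕ), p.Prime →
      ∃ S : Finset (Matrix.SpecialLinearGroup (Fin n) (ZMod p)),
        S.card ≤ 3 ∧
        Subgroup.closure (S : Set (Matrix.SpecialLinearGroup (Fin n) (ZMod p))) = ⊤ ∧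
        ∀ M : Matrix.SpecialLinearGroup (Fin n) (ZMod p),
          ∃ l : List (Matrix.SpecialLinearGroup (Fin n) (ZMod p)),
            (l.length : ℝ) ≤ K * n ^ 2 * Real.log p ∧
            (∀ x ∈ l, x ∈ S ∨ x⁻¹ ∈ S) ∧
            l.prod = M := by
  refine ⟨252, by norm_num, fun n p hp => ?_⟩
  have : Fact p.Prime := ⟨hp⟩
  obtain ⟨S, hcard, hS⟩ := exists_wordBall_eq_univ n p
  refine ⟨S, hcard, closure_eq_top_of_wordBall_eq_univ hS, fun M => ?_⟩
  obtain ⟨l, hlen, hl, hprod⟩ := exists_list_of_mem_wordBall (hS ▸ Set.mem_univ M)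
  refine ⟨l, ?_, hl, hprod⟩
  calc (l.length : ℝ) ≤ ((84 * n ^ 2 * (Nat.log 2 p + 1) : ℕ) : ℝ) := mod_cast hlen
    _ = 84 * n ^ 2 * (Nat.log 2 p + 1) := by push_cast; rfl
    _ ≤ 84 * n ^ 2 * (3 * Real.log p) := by gcongr; exact natLog_two_add_one_le hp.two_le
    _ = 252 * n ^ 2 * Real.log p := by ring

/-- There is a constant K > 0 such that for every n ≥ 3 and every prime p, SL_n(𝔽_p) has
a generating set Σ of at most 3 elements such that every element of SL_n(𝔽_p) is a
product of at most K·n²·ln p elements of Σ ∪ Σ⁻¹. -/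
theorem exists_three_element_generating_set_SL_n_Fp :
    ∃ K : ℝ, 0 < K ∧ ∀ (n p : ℕ), 3 ≤ n → p.Prime →
      ∃ S : Finset (Matrix.SpecialLinearGroup (Fin n) (ZMod p)),
        S.card ≤ 3 ∧
        Subgroup.closure (S : Set (Matrix.SpecialLinearGroup (Fin n) (ZMod p))) = ⊤ ∧
        ∀ M : Matrix.SpecialLinearGroup (Fin n) (ZMod p),
          ∃ l : List (Matrix.SpecialLinearGroup (Fin n) (ZMod p)),
            (l.length : ℝ) ≤ K * n ^ 2 * Real.log p ∧
            (∀ x ∈ l, x ∈ S ∨ x⁻¹ ∈ S) ∧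
            l.prod = M :=
  let ⟨K, hK, h⟩ := exists_three_element_generating_set_SL_n_Fp_general
  ⟨K, hK, fun n p _ => h n p⟩
end
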